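/- arXiv:1502.04318 — 6 statements merged into one kernel-verified Lean document; each statement's English description precedes it below -/
import Mathlib

section
/- Under the uniform two-step contraction condition, for every bounded measurable F : E → ℝ and every x₀ ∈ E: ℙ_{x₀}-almost surely only finitely many of the terms F(X_n) are nonzero, the random series S = Σ_{n=0}^∞ F(X_n) converges absolutely almost surely and is integrable, and 𝔼_{x₀}[S] = Σ_{n=0}^∞ (K^n F)(x₀); that is, the score-sum estimator S is an unbiased estimator of the Neumann-series solution of u = K u + F. -/
open MeasureTheory ProbabilityTheory

/-- The measurable-space structure on `E ∪ {∂}`, realized as `Option E` with `∂ = none`. -/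
instance {α : Type*} [MeasurableSpace α] : MeasurableSpace (Option α) :=
  MeasurableSpace.comap (fun o => ((Equiv.optionEquivSumPUnit α) o : α ⊕ PUnit.{1})) inferInstance

/-- The integral operator `(K F)(x) = ∫ F(y) κ(x, dy)` associated to a kernel `κ`. -/
noncomputable def Kop {E : Type*} [MeasurableSpace E] (κ : Kernel E E) (F : E → ℝ) : E → ℝ :=
  fun x => ∫ y, F y ∂(κ x)

/-- The `n`-th iterate `K^n` of the integral operator. -/
noncomputable def Kiter {E : Type*} [MeasurableSpace E] (κ : Kernel E E) : ℕ → (E → ℝ) → E → ℝ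
  | 0 => id
  | n + 1 => fun F => Kop κ (Kiter κ n F)


lemma aux_some {E : Type*} [MeasurableSpace E] : Measurable (some : E → Option E) := by
  rw [measurable_comap_iff]
  exact measurable_inl

lemma aux_ext {E : Type*} [MeasurableSpace E] (G : E → ℝ) (hG : Measurable G) :
    Measurable (fun o : Option E => o.elim 0 G) := by
  have h : (fun o : Option E => o.elim 0 G) =
      (Sum.elim G (fun _ => 0)) ∘ (fun o => ((Equiv.optionEquivSumPUnit E) o : E ⊕ PUnit.{1})) := by
    funext o; cases o <;> simp
  rw [h]
  exact (hG.sumElim measurable_const).comp (comap_measurable _)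

lemma aux_kop {E : Type*} [MeasurableSpace E] (κ : Kernel E E) [IsFiniteKernel κ]
    (G : E → ℝ) (hG : Measurable G) : Measurable (Kop κ G) :=
  (hG.stronglyMeasurable.integral_kernel (κ := κ)).measurable

lemma aux_kop_le {E : Type*} [MeasurableSpace E] (κ : Kernel E E) [IsFiniteKernel κ]
    (G : E → ℝ) (C : ℝ) (hC : ∀ x, |G x| ≤ C) (x : E) :
    |Kop κ G x| ≤ C * (κ x).real Set.univ := by
  have h : ∀ᵐ y ∂(κ x), ‖G y‖ ≤ C := Filter.Eventually.of_forall fun y => hC y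
  have := norm_integral_le_of_norm_le_const h
  rw [Real.norm_eq_abs] at this
  exact this

lemma aux_kop_le' {E : Type*} [MeasurableSpace E] (κ : Kernel E E) [IsFiniteKernel κ]
    (hsub : ∀ x, κ x Set.univ ≤ 1)
    (G : E → ℝ) (C : ℝ) (hC : ∀ x, |G x| ≤ C) (x : E) : |Kop κ G x| ≤ C := by
  refine (aux_kop_le κ G C hC x).trans ?_
  have h1 : (κ x).real Set.univ ≤ 1 := ENNReal.toReal_mono (by simp) (hsub x)
  have := (abs_nonneg _).trans (hC x)
  nlinarith

lemma aux_kop2 {E : Type*} [MeasurableSpace E] (κ : Kernel E E) [IsFiniteKernel κ]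
    (hsub : ∀ x, κ x Set.univ ≤ 1) (D : ℝ) (hD : 0 ≤ D)
    (hcontract : ∀ x, ∫⁻ y, κ y Set.univ ∂(κ x) ≤ ENNReal.ofReal D)
    (G : E → ℝ) (C : ℝ) (hC : ∀ x, |G x| ≤ C) (x : E) :
    |Kop κ (Kop κ G) x| ≤ C * D := by
  have h0 := (abs_nonneg _).trans (hC x)
  have hm : Measurable fun y => κ y Set.univ := κ.measurable_coe MeasurableSet.univ
  have hi : Integrable (fun y => (κ y).real Set.univ) (κ x) := by
    apply integrable_toReal_of_lintegral_ne_top hm.aemeasurable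
    exact ((hcontract x).trans_lt ENNReal.ofReal_lt_top).ne
  have h1 : ∫ y, (κ y).real Set.univ ∂(κ x) ≤ D := by
    have := integral_toReal (μ := κ x) hm.aemeasurable
      (Filter.Eventually.of_forall fun y => (hsub y).trans_lt ENNReal.one_lt_top)
    unfold Measure.real
    rw [this]
    exact ENNReal.toReal_le_of_le_ofReal hD (hcontract x)
  have h2 : ∀ᵐ y ∂(κ x), ‖Kop κ G y‖ ≤ C * (κ y).real Set.univ :=
    Filter.Eventually.of_forall fun y => aux_kop_le κ G C hC y
  have h3 := norm_integral_le_of_norm_le (hi.const_mul C) h2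
  rw [Real.norm_eq_abs] at h3
  calc |Kop κ (Kop κ G) x| ≤ ∫ y, C * (κ y).real Set.univ ∂(κ x) := h3
    _ = C * ∫ y, (κ y).real Set.univ ∂(κ x) := integral_const_mul _ _
    _ ≤ C * D := by gcongr

lemma aux_kiter_succ {E : Type*} [MeasurableSpace E] (κ : Kernel E E) (n : ℕ) (G : E → ℝ) :
    Kiter κ (n + 1) G = Kiter κ n (Kop κ G) := by
  induction n with
  | zero => rfl
  | succ n ih =>
    change Kop κ (Kiter κ (n + 1) G) = Kop κ (Kiter κ n (Kop κ G))
    rw [ih]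

lemma aux_kiter_even {E : Type*} [MeasurableSpace E] (κ : Kernel E E) [IsFiniteKernel κ]
    (hsub : ∀ x, κ x Set.univ ≤ 1) (D : ℝ) (hD : 0 ≤ D)
    (hcontract : ∀ x, ∫⁻ y, κ y Set.univ ∂(κ x) ≤ ENNReal.ofReal D)
    (G : E → ℝ) (C : ℝ) (hC : ∀ x, |G x| ≤ C) (m : ℕ) :
    ∀ x, |Kiter κ (2 * m) G x| ≤ C * D ^ m := by
  induction m with
  | zero => simpa [Kiter] using hC
  | succ m ih =>
    intro x
    have := aux_kop2 κ hsub D hD hcontract _ _ ih x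
    rw [pow_succ, ← mul_assoc]
    exact this

lemma aux_summable {E : Type*} [MeasurableSpace E] (κ : Kernel E E) [IsFiniteKernel κ]
    (hsub : ∀ x, κ x Set.univ ≤ 1) (D : ℝ) (hD : 0 ≤ D) (hD1 : D < 1)
    (hcontract : ∀ x, ∫⁻ y, κ y Set.univ ∂(κ x) ≤ ENNReal.ofReal D)
    (G : E → ℝ) (C : ℝ) (hC : ∀ x, |G x| ≤ C) (x : E) :
    Summable fun n => Kiter κ n G x := by
  have hg : Summable fun m : ℕ => C * D ^ m := (summable_geometric_of_lt_one hD hD1).mul_left C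
  have hev := aux_kiter_even κ hsub D hD hcontract G C hC
  have hod : ∀ m, |Kiter κ (2 * m + 1) G x| ≤ C * D ^ m := by
    intro m
    have := aux_kop_le' κ hsub (Kiter κ (2 * m) G) _ (hev m) x
    exact this
  have hfun : ∀ u : ℕ → ℝ, (∀ m, |u (2 * m)| ≤ C * D ^ m) → (∀ m, |u (2 * m + 1)| ≤ C * D ^ m) →
      Summable u := by
    intro u h1 h2
    have he : Summable fun m => u (2 * m) := Summable.of_norm_bounded hg h1
    have ho : Summable fun m => u (2 * m + 1) := Summable.of_norm_bounded hg h2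
    exact (HasSum.even_add_odd he.hasSum ho.hasSum).summable
  exact hfun (fun n => Kiter κ n G x) (fun m => hev m x) hod

lemma aux_hat {E : Type*} [MeasurableSpace E] (κ : Kernel E E) [IsFiniteKernel κ]
    (κhat : Kernel (Option E) (Option E))
    (hκhat : ∀ a : E, ∀ A : Set (Option E), MeasurableSet A →
      κhat (some a) A = κ a (some ⁻¹' A) + (1 - κ a Set.univ) * A.indicator 1 none)
    (hκhatCemetery : κhat none = Measure.dirac none)
    (G : E → ℝ) (hG : Measurable G) (C : ℝ) (hC : ∀ x, |G x| ≤ C) (o : Option E) :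
    ∫ y, y.elim 0 G ∂(κhat o) = o.elim 0 (Kop κ G) := by
  have hm := aux_ext G hG
  cases o with
  | none =>
    rw [hκhatCemetery, integral_dirac' _ _ hm.stronglyMeasurable]
    rfl
  | some a =>
    have h : κhat (some a) = (κ a).map some + (1 - κ a Set.univ) • Measure.dirac none := by
      ext A hA
      rw [hκhat a A hA]
      simp [Measure.map_apply aux_some hA, Measure.dirac_apply' _ hA]
    rw [h, integral_add_measure, integral_map aux_some.aemeasurable hm.aestronglyMeasurable,
      integral_smul_measure, integral_dirac' _ _ hm.stronglyMeasurable]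
    · simp [Kop]
    · rw [integrable_map_measure hm.aestronglyMeasurable aux_some.aemeasurable]
      exact Integrable.of_bound hG.aestronglyMeasurable C (Filter.Eventually.of_forall hC)
    · apply Integrable.smul_measure _ (by finiteness)
      exact integrable_dirac' hm.stronglyMeasurable (by simp)

lemma aux_chain {E : Type*} [MeasurableSpace E] (κ : Kernel E E) [IsFiniteKernel κ]
    (hsub : ∀ x, κ x Set.univ ≤ 1)
    (κhat : Kernel (Option E) (Option E))
    (hκhat : ∀ a : E, ∀ A : Set (Option E), MeasurableSet A →
      κhat (some a) A = κ a (some ⁻¹' A) + (1 - κ a Set.univ) * A.indicator 1 none)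
    (hκhatCemetery : κhat none = Measure.dirac none)
    (x₀ : E)
    {Ω : Type*} [MeasurableSpace Ω] (P : Measure Ω) [IsProbabilityMeasure P]
    (X : ℕ → Ω → Option E)
    (hX₀ : ∀ ω, X 0 ω = some x₀)
    (hMarkov : ∀ n : ℕ, ∀ g : Option E → ℝ, Measurable g → (∃ Cg, ∀ y, |g y| ≤ Cg) →
      ∫ ω, g (X (n + 1) ω) ∂P = ∫ ω, ∫ y, g y ∂(κhat (X n ω)) ∂P) (n : ℕ) :
    ∀ (G : E → ℝ), Measurable G → ∀ C : ℝ, (∀ x, |G x| ≤ C) →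
    ∫ ω, (X n ω).elim 0 G ∂P = Kiter κ n G x₀ := by
  induction n with
  | zero =>
    intro G _ C _
    simp [hX₀, Kiter]
  | succ n ih =>
    intro G hG C hC
    rw [hMarkov n (fun o => o.elim 0 G) (aux_ext G hG) ⟨C, fun y => ?_⟩, aux_kiter_succ,
      ← ih (Kop κ G) (aux_kop κ G hG) C (aux_kop_le' κ hsub G C hC)]
    · simp_rw [aux_hat κ κhat hκhat hκhatCemetery G hG C hC]
    · cases y with
      | none => simpa using (abs_nonneg _).trans (hC x₀)
      | some a => exact hC a

/-- Under the uniform two-step contraction condition, for every bounded measurable `F` and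
every starting point `x₀ ∈ E`: `ℙ_{x₀}`-a.s. only finitely many of the terms `F(X_n)` are
nonzero, the score sum `S = Σ_n F(X_n)` converges absolutely a.s. and is integrable, and
`𝔼_{x₀}[S] = Σ_n (K^n F)(x₀)`, i.e. `S` is an unbiased estimator of the Neumann-series
solution of `u = K u + F`.  Here the chain `(X_n)` on `E ∪ {∂} = Option E` (with `∂ = none`)
has transition kernel `κ̂` extending `κ`, starts at `x₀`, and `F` is extended by `F(∂) = 0`. -/
theorem stmt1 {E : Type*} [MeasurableSpace E] (κ : Kernel E E)
    (hsub : ∀ x, κ x Set.univ ≤ 1)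
    (C₁ : ℝ) (hC₁ : C₁ < 1)
    (hcontract : ∀ x, ∫⁻ y, κ y Set.univ ∂(κ x) ≤ ENNReal.ofReal C₁)
    (F : E → ℝ) (hFmeas : Measurable F) (hFbd : ∃ C, ∀ x, |F x| ≤ C)
    -- the extended Markov kernel `κ̂` on `E ∪ {∂}`, where `∂ = none`
    (κhat : Kernel (Option E) (Option E)) [IsMarkovKernel κhat]
    (hκhat : ∀ a : E, ∀ A : Set (Option E), MeasurableSet A →
      κhat (some a) A = κ a (some ⁻¹' A) + (1 - κ a Set.univ) * A.indicator 1 none)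
    (hκhatCemetery : κhat none = Measure.dirac none)
    (x₀ : E)
    -- the Markov chain `(X_n)` with transition kernel `κ̂`, `X₀ = x₀`, and law `P = ℙ_{x₀}`
    {Ω : Type*} [MeasurableSpace Ω] (P : Measure Ω) [IsProbabilityMeasure P]
    (X : ℕ → Ω → Option E) (hXmeas : ∀ n, Measurable (X n))
    (hX₀ : ∀ ω, X 0 ω = some x₀)
    (hMarkov : ∀ n : ℕ, ∀ f : (Fin (n + 1) → Option E) → ℝ, Measurable f →
      (∃ Cf, ∀ v, |f v| ≤ Cf) → ∀ g : Option E → ℝ, Measurable g → (∃ Cg, ∀ y, |g y| ≤ Cg) →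
      ∫ ω, f (fun i => X i ω) * g (X (n + 1) ω) ∂P
        = ∫ ω, f (fun i => X i ω) * ∫ y, g y ∂(κhat (X n ω)) ∂P) :
    (∀ᵐ ω ∂P, {n : ℕ | (X n ω).elim 0 F ≠ 0}.Finite) ∧
    (∀ᵐ ω ∂P, Summable fun n => |(X n ω).elim 0 F|) ∧
    Integrable (fun ω => ∑' n, (X n ω).elim 0 F) P ∧
    ∫ ω, (∑' n, (X n ω).elim 0 F) ∂P = ∑' n, Kiter κ n F x₀ := by

  obtain ⟨C, hC⟩ := hFbd
  have hfin : IsFiniteKernel κ := ⟨1, ENNReal.one_lt_top, hsub⟩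
  have hM : ∀ n : ℕ, ∀ g : Option E → ℝ, Measurable g → (∃ Cg, ∀ y, |g y| ≤ Cg) →
      ∫ ω, g (X (n + 1) ω) ∂P = ∫ ω, ∫ y, g y ∂(κhat (X n ω)) ∂P := by
    intro n g hg hb
    simpa using hMarkov n (fun _ => 1) measurable_const ⟨1, by simp⟩ g hg hb
  have hchain := aux_chain κ hsub κhat hκhat hκhatCemetery x₀ P X hX₀ hM
  have hcon : ∀ x, ∫⁻ y, κ y Set.univ ∂(κ x) ≤ ENNReal.ofReal (max C₁ 0) :=
    fun x => (hcontract x).trans (ENNReal.ofReal_le_ofReal (le_max_left _ _))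
  have hsum := aux_summable κ hsub (max C₁ 0) (le_max_right _ _) (max_lt hC₁ one_pos) hcon
  have hC0 : 0 ≤ C := (abs_nonneg _).trans (hC x₀)
  have hint : ∀ G : E → ℝ, Measurable G → ∀ C : ℝ, (∀ x, |G x| ≤ C) → ∀ n,
      Integrable (fun ω => (X n ω).elim 0 G) P := by
    intro G hG C hC n
    refine Integrable.of_bound (((aux_ext G hG).comp (hXmeas n)).aestronglyMeasurable) C
      (Filter.Eventually.of_forall fun ω => ?_)
    cases X n ω with
    | none => simpa using (abs_nonneg _).trans (hC x₀)
    | some a => exact hC a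
  -- finiteness, by Borel-Cantelli
  have hone : ∀ x : E, |(fun _ : E => (1 : ℝ)) x| ≤ 1 := by simp
  have halive : ∀ᵐ ω ∂P, {n : ℕ | ω ∈ {ω | (X n ω).elim 0 (fun _ : E => (1 : ℝ)) = 1}}.Finite := by
    apply ae_finite_setOfPred_mem
    have h1 : ∀ n, P {ω | (X n ω).elim 0 (fun _ : E => (1 : ℝ)) = 1}
        = ENNReal.ofReal (Kiter κ n (fun _ => 1) x₀) := by
      intro n
      have hmeas : MeasurableSet {ω | (X n ω).elim 0 (fun _ : E => (1 : ℝ)) = 1} :=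
        ((aux_ext _ measurable_const).comp (hXmeas n)) (measurableSet_singleton 1)
      rw [← hchain n (fun _ => 1) measurable_const 1 hone]
      have : (fun ω => (X n ω).elim 0 (fun _ : E => (1 : ℝ)))
          = Set.indicator {ω | (X n ω).elim 0 (fun _ : E => (1 : ℝ)) = 1} 1 := by
        funext ω
        by_cases h : (X n ω).elim 0 (fun _ : E => (1 : ℝ)) = 1
        · rw [Set.indicator_of_mem (by exact h)]; exact h
        · rw [Set.indicator_of_notMem (by exact h)]
          revert h
          cases X n ω <;> simp
      conv_rhs => rw [this]
      rw [integral_indicator_one hmeas, ofReal_measureReal]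
    simp_rw [h1]
    exact (hsum (fun _ => 1) 1 hone x₀).tsum_ofReal_ne_top
  have hfinite : ∀ᵐ ω ∂P, {n : ℕ | (X n ω).elim 0 F ≠ 0}.Finite := by
    filter_upwards [halive] with ω hω
    refine hω.subset fun n hn => ?_
    simp only [Set.mem_ofPred_eq] at hn ⊢
    revert hn
    cases X n ω <;> simp
  have hnormeq : ∀ n ω, ‖(X n ω).elim 0 F‖ = (X n ω).elim 0 (fun x => |F x|) := by
    intro n ω
    cases X n ω <;> simp
  have habs : ∀ x, |(fun x => |F x|) x| ≤ C := by simpa using hC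
  have hns : Summable fun n => ∫ ω, ‖(X n ω).elim 0 F‖ ∂P := by
    simp_rw [hnormeq, hchain _ (fun x => |F x|) hFmeas.abs C habs]
    exact hsum _ C habs x₀
  have hFi := hint F hFmeas C hC
  refine ⟨hfinite, ?_, ?_, ?_⟩
  · filter_upwards [hfinite] with ω hω
    exact summable_of_hasFiniteSupport (hω.subset fun n hn => by simpa using hn)
  · have hae : AEStronglyMeasurable (fun ω => ∑' n, (X n ω).elim 0 F) P :=
      (Measurable.tsum fun n => (aux_ext F hFmeas).comp (hXmeas n)).aestronglyMeasurable
    refine ⟨hae, ?_⟩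
    have hle : ∫⁻ ω, ‖∑' n, (X n ω).elim 0 F‖ₑ ∂P
        ≤ ∫⁻ ω, ∑' n, ‖(X n ω).elim 0 F‖ₑ ∂P := by
      apply lintegral_mono
      intro ω
      exact enorm_tsum_le_tsum_enorm
    refine hle.trans_lt ?_
    rw [lintegral_tsum fun n => (hFi n).1.enorm]
    have : ∀ n, ∫⁻ ω, ‖(X n ω).elim 0 F‖ₑ ∂P = ENNReal.ofReal (∫ ω, ‖(X n ω).elim 0 F‖ ∂P) :=
      fun n => (ofReal_integral_norm_eq_lintegral_enorm (hFi n)).symm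
    simp_rw [this]
    exact hns.tsum_ofReal_ne_top.lt_top
  · rw [← integral_tsum_of_summable_integral_norm hFi hns]
    exact tsum_congr fun n => hchain n F hFmeas C hC
end

section
/- Under the uniform two-step contraction condition, for every bounded measurable F : E → ℝ and every x₀ ∈ E, writing u = Σ_{n=0}^∞ K^n F for the Neumann-series solution of u = Ku + F, the second moment of the score-sum estimator S = Σ_{n=0}^∞ F(X_n) is given exactly by 𝔼_{x₀}[S²] = Σ_{j=0}^∞ K^j(2 F·u − F²)(x₀), where F·u and F² denote pointwise products; in particular the series on the right-hand side converges absolutely. -/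
open MeasureTheory ProbabilityTheory

section Helpers

variable {E : Type*} [MeasurableSpace E]

theorem aux_meas_some : Measurable (some : E → Option E) := by
  apply measurable_comap_iff.2
  exact measurable_inl

theorem aux_meas_elim {g : E → ℝ} (hg : Measurable g) :
    Measurable (fun o : Option E => o.elim 0 g) := by
  have h1 : Measurable (fun o : Option E => ((Equiv.optionEquivSumPUnit E) o : E ⊕ PUnit.{1})) :=
    comap_measurable _
  have h2 : Measurable (Sum.elim g (fun _ : PUnit.{1} => (0 : ℝ))) :=
    hg.sumElim measurable_const
  have h3 : (fun o : Option E => o.elim 0 g)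
      = (Sum.elim g (fun _ : PUnit.{1} => (0 : ℝ))) ∘
        (fun o : Option E => ((Equiv.optionEquivSumPUnit E) o : E ⊕ PUnit.{1})) := by
    funext o
    cases o <;> simp
  rw [h3]
  exact h2.comp h1

theorem aux_elim_bd {E : Type*} {g : E → ℝ} {M : ℝ} (hM : 0 ≤ M) (hg : ∀ x, |g x| ≤ M) (o : Option E) :
    |o.elim 0 g| ≤ M := by
  cases o with
  | none => simpa using hM
  | some a => simpa using hg a

theorem aux_Kop_meas (κ : Kernel E E) {g : E → ℝ} (hg : Measurable g) :
    Measurable (Kop κ g) :=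
  (StronglyMeasurable.integral_kernel hg.stronglyMeasurable).measurable

theorem aux_Kiter_meas (κ : Kernel E E) {g : E → ℝ} (hg : Measurable g) (n : ℕ) :
    Measurable (Kiter κ n g) := by
  induction n with
  | zero => exact hg
  | succ n ih => exact aux_Kop_meas κ ih

theorem aux_Kiter_comm (κ : Kernel E E) (g : E → ℝ) (n : ℕ) :
    Kiter κ (n + 1) g = Kiter κ n (Kop κ g) := by
  induction n with
  | zero => rfl
  | succ n ih =>
    change Kop κ (Kiter κ (n + 1) g) = Kop κ (Kiter κ n (Kop κ g))
    rw [ih]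

theorem aux_Kop_bd0 (κ : Kernel E E) (hsub : ∀ x, κ x Set.univ ≤ 1) {g : E → ℝ} {M : ℝ}
    (hg : ∀ x, |g x| ≤ M) (x : E) : |Kop κ g x| ≤ M * (κ x Set.univ).toReal := by
  have : IsFiniteMeasure (κ x) := ⟨(hsub x).trans_lt ENNReal.one_lt_top⟩
  have h : ∀ᵐ y ∂(κ x), ‖g y‖ ≤ M := Filter.Eventually.of_forall hg
  exact norm_integral_le_of_norm_le_const h

theorem aux_Kop_bd1 (κ : Kernel E E) (hsub : ∀ x, κ x Set.univ ≤ 1) {g : E → ℝ} {M : ℝ}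
    (hM : 0 ≤ M) (hg : ∀ x, |g x| ≤ M) (x : E) : |Kop κ g x| ≤ M := by
  refine (aux_Kop_bd0 κ hsub hg x).trans (mul_le_of_le_one_right hM ?_)
  exact ENNReal.toReal_mono ENNReal.one_ne_top (hsub x)

theorem aux_Kop_bd2 (κ : Kernel E E) (hsub : ∀ x, κ x Set.univ ≤ 1) {c : ℝ} (hc : 0 ≤ c)
    (hcontract : ∀ x, ∫⁻ y, κ y Set.univ ∂(κ x) ≤ ENNReal.ofReal c) {g : E → ℝ} {M : ℝ}
    (hM : 0 ≤ M) (hg : ∀ x, |g x| ≤ M) (x : E) :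
    |Kop κ (Kop κ g) x| ≤ M * c := by
  have hm : Measurable (fun y => κ y Set.univ) := κ.measurable_coe MeasurableSet.univ
  have hfin : ∫⁻ y, κ y Set.univ ∂(κ x) ≠ ⊤ := ((hcontract x).trans_lt ENNReal.ofReal_lt_top).ne
  have hint : Integrable (fun y => (κ y Set.univ).toReal) (κ x) :=
    integrable_toReal_of_lintegral_ne_top hm.aemeasurable hfin
  have h1 : |Kop κ (Kop κ g) x| ≤ ∫ y, M * (κ y Set.univ).toReal ∂(κ x) := by
    have h : ∀ᵐ y ∂(κ x), ‖Kop κ g y‖ ≤ M * (κ y Set.univ).toReal :=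
      Filter.Eventually.of_forall (aux_Kop_bd0 κ hsub hg)
    exact norm_integral_le_of_norm_le (hint.const_mul M) h
  refine h1.trans ?_
  rw [integral_const_mul]
  refine mul_le_mul_of_nonneg_left ?_ hM
  rw [integral_toReal hm.aemeasurable
    (Filter.Eventually.of_forall fun y => (hsub y).trans_lt ENNReal.one_lt_top)]
  exact ENNReal.toReal_le_of_le_ofReal hc (hcontract x)

theorem aux_Kiter_bd (κ : Kernel E E) (hsub : ∀ x, κ x Set.univ ≤ 1) {c : ℝ} (hc : 0 ≤ c)
    (hcontract : ∀ x, ∫⁻ y, κ y Set.univ ∂(κ x) ≤ ENNReal.ofReal c) {g : E → ℝ} {M : ℝ}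
    (hM : 0 ≤ M) (hg : ∀ x, |g x| ≤ M) (n : ℕ) : ∀ x, |Kiter κ n g x| ≤ M * c ^ (n / 2) := by
  induction n using Nat.twoStepInduction with
  | zero => simpa [Kiter] using hg
  | one =>
    intro x
    simpa [Kiter] using aux_Kop_bd1 κ hsub hM hg x
  | more n ih _ =>
    intro x
    have h := aux_Kop_bd2 κ hsub hc hcontract (by positivity) ih x
    have e : (n + 2) / 2 = n / 2 + 1 := by omega
    rw [e, pow_succ, ← mul_assoc]
    exact h

theorem aux_summable_s4 {c : ℝ} (hc : 0 ≤ c) (hc1 : c < 1) : Summable (fun n : ℕ => c ^ (n / 2)) := by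
  have hg := summable_geometric_of_lt_one hc hc1
  have he : (fun k : ℕ => c ^ ((2 * k) / 2)) = fun k => c ^ k := by
    funext k
    rw [show (2 * k) / 2 = k by omega]
  have ho : (fun k : ℕ => c ^ ((2 * k + 1) / 2)) = fun k => c ^ k := by
    funext k
    rw [show (2 * k + 1) / 2 = k by omega]
  have he' : HasSum (fun k : ℕ => c ^ ((2 * k) / 2)) (∑' n, c ^ n) := by
    rw [he]
    exact hg.hasSum
  have ho' : HasSum (fun k : ℕ => c ^ ((2 * k + 1) / 2)) (∑' n, c ^ n) := by
    rw [ho]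
    exact hg.hasSum
  exact (HasSum.even_add_odd (f := fun n : ℕ => c ^ (n / 2)) he' ho').summable

theorem aux_khat (κ : Kernel E E) (hsub : ∀ x, κ x Set.univ ≤ 1)
    (κhat : Kernel (Option E) (Option E))
    (hκhat : ∀ a : E, ∀ A : Set (Option E), MeasurableSet A →
      κhat (some a) A = κ a (some ⁻¹' A) + (1 - κ a Set.univ) * A.indicator 1 none)
    (hκhatCemetery : κhat none = Measure.dirac none)
    {g : E → ℝ} (hg : Measurable g) {M : ℝ} (hM : 0 ≤ M) (hb : ∀ x, |g x| ≤ M) (o : Option E) :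
    ∫ y, y.elim 0 g ∂(κhat o) = o.elim 0 (Kop κ g) := by
  have hm := aux_meas_elim hg
  cases o with
  | none =>
    rw [hκhatCemetery, integral_dirac' _ _ hm.stronglyMeasurable]
    rfl
  | some a =>
    have : IsFiniteMeasure (κ a) := ⟨(hsub a).trans_lt ENNReal.one_lt_top⟩
    have e : κhat (some a) = (κ a).map some + (1 - κ a Set.univ) • Measure.dirac none := by
      ext A hA
      rw [hκhat a A hA, Measure.add_apply, Measure.map_apply aux_meas_some hA, Measure.smul_apply,
        Measure.dirac_apply' _ hA, smul_eq_mul]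
    have hfin : (1 - κ a Set.univ) ≠ ⊤ := (tsub_le_self.trans_lt ENNReal.one_lt_top).ne
    have hi : ∀ μ : Measure (Option E), IsFiniteMeasure μ →
        Integrable (fun y : Option E => y.elim 0 g) μ := fun μ _ =>
      Integrable.of_bound hm.aestronglyMeasurable M
        (Filter.Eventually.of_forall (aux_elim_bd hM hb))
    rw [e, integral_add_measure (hi _ inferInstance) ((hi _ inferInstance).smul_measure hfin),
      integral_map aux_meas_some.aemeasurable hm.aestronglyMeasurable, integral_smul_measure,
      integral_dirac' _ _ hm.stronglyMeasurable]
    simp [Kop]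

theorem aux_sq {a : ℕ → ℝ} (ha : Summable a) :
    HasSum (fun p : ℕ × ℕ => (2 - if p.2 = 0 then 1 else 0) * (a p.1 * a (p.1 + p.2)))
      ((∑' n, a n) ^ 2) := by
  have hna : Summable (fun n => ‖a n‖) := ha.norm
  have hs0 : Summable (fun p : ℕ × ℕ => a p.1 * a (p.1 + p.2)) := by
    have h := summable_mul_of_summable_norm hna hna
    have hinj : Function.Injective (fun p : ℕ × ℕ => (p.1, p.1 + p.2)) := by
      rintro ⟨i, j⟩ ⟨k, l⟩ h
      simp only [Prod.mk.injEq] at h ⊢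
      omega
    exact h.comp_injective hinj
  have hs : Summable
      (fun p : ℕ × ℕ => (2 - if p.2 = 0 then 1 else 0) * (a p.1 * a (p.1 + p.2))) := by
    refine Summable.of_norm_bounded (hs0.norm.mul_left 2) fun p => ?_
    rw [norm_mul]
    refine mul_le_mul_of_nonneg_right ?_ (norm_nonneg _)
    split_ifs <;> norm_num
  set T : ℕ → ℝ := fun n => ∑' k, a (k + n) with hT
  have hrow : ∀ n, HasSum (fun k => (2 - if k = 0 then 1 else 0) * (a n * a (n + k)))
      (T n ^ 2 - T (n + 1) ^ 2) := by
    intro n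
    have h1 : HasSum (fun k => a (n + k)) (T n) := by
      have := ((summable_nat_add_iff n).2 ha).hasSum
      simpa only [hT, add_comm n] using this
    have h2 : T n = a n + T (n + 1) := by
      have := ((summable_nat_add_iff n).2 ha).tsum_eq_zero_add
      simp only [hT]
      rw [this]
      simp only [zero_add, add_assoc, add_comm 1 n]
    have h3 : HasSum (fun k : ℕ => if k = 0 then a n * a n else 0) (a n * a n) :=
      hasSum_ite_eq 0 _
    have h4 := (h1.mul_left (2 * a n)).sub h3
    have e1 : (fun k => (2 - if k = 0 then 1 else 0) * (a n * a (n + k)))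
        = fun k : ℕ => 2 * a n * a (n + k) - if k = 0 then a n * a n else 0 := by
      funext k
      split_ifs with hk
      · subst hk
        simp only [add_zero]
        ring
      · ring
    have e2 : T n ^ 2 - T (n + 1) ^ 2 = 2 * a n * T n - a n * a n := by
      rw [h2]
      ring
    rw [e1, e2]
    exact h4
  have htel : HasSum (fun n => T n ^ 2 - T (n + 1) ^ 2) (T 0 ^ 2) := by
    have hsm : Summable (fun n => T n ^ 2 - T (n + 1) ^ 2) := by
      have := hs.prod
      simpa only [(hrow _).tsum_eq] using this
    have hlim := hsm.hasSum.tendsto_sum_nat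
    simp only [Finset.sum_range_sub'] at hlim
    have h0 : Filter.Tendsto T Filter.atTop (nhds 0) := tendsto_sum_nat_add a
    have hl2 : Filter.Tendsto (fun n => T 0 ^ 2 - T n ^ 2) Filter.atTop (nhds (T 0 ^ 2)) := by
      simpa using (h0.pow 2).const_sub (T 0 ^ 2)
    have := tendsto_nhds_unique hlim hl2
    rw [← this]
    exact hsm.hasSum
  have hu := HasSum.prod_fiberwise hs.hasSum hrow
  have := hu.unique htel
  have h0 : T 0 = ∑' n, a n := by simp [hT]
  rw [← h0, ← this]
  exact hs.hasSum

theorem aux_ae_summable {Ω : Type*} [MeasurableSpace Ω] {P : Measure Ω} {a : ℕ → Ω → ℝ}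
    (hi : ∀ n, Integrable (a n) P) {r : ℕ → ℝ} (hr : Summable r)
    (hb : ∀ n, ∫ ω, ‖a n ω‖ ∂P ≤ r n) : ∀ᵐ ω ∂P, Summable (fun n => a n ω) := by
  have hr0 : ∀ n, 0 ≤ r n := fun n => (integral_nonneg fun _ => norm_nonneg _).trans (hb n)
  have hfin : ∫⁻ ω, ∑' n, ‖a n ω‖ₑ ∂P ≠ ⊤ := by
    rw [lintegral_tsum fun n => (hi n).1.enorm]
    have h : ∀ n, ∫⁻ ω, ‖a n ω‖ₑ ∂P ≤ ENNReal.ofReal (r n) := by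
      intro n
      rw [← ofReal_integral_norm_eq_lintegral_enorm (hi n)]
      exact ENNReal.ofReal_le_ofReal (hb n)
    refine ((ENNReal.tsum_le_tsum h).trans_lt ?_).ne
    rw [← ENNReal.ofReal_tsum_of_nonneg hr0 hr]
    exact ENNReal.ofReal_lt_top
  filter_upwards [ae_lt_top' (AEMeasurable.tsum fun n => (hi n).1.enorm) hfin] with ω hω
  have : Summable (fun n => ‖a n ω‖₊) := ENNReal.tsum_coe_ne_top_iff_summable.1 hω.ne
  exact Summable.of_nnnorm this

end Helpers

/-- Under the uniform two-step contraction condition, for every bounded measurable `F` and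
every `x₀ ∈ E`, writing `u = Σ_n K^n F` for the Neumann-series solution of `u = Ku + F`,
the second moment of the score-sum estimator `S = Σ_n F(X_n)` is exactly
`𝔼_{x₀}[S²] = Σ_j K^j (2 F·u − F²)(x₀)`, the right-hand series converging absolutely. -/
theorem stmt4 {E : Type*} [MeasurableSpace E] (κ : Kernel E E)
    (hsub : ∀ x, κ x Set.univ ≤ 1)
    (C₁ : ℝ) (hC₁ : C₁ < 1)
    (hcontract : ∀ x, ∫⁻ y, κ y Set.univ ∂(κ x) ≤ ENNReal.ofReal C₁)
    (F : E → ℝ) (hFmeas : Measurable F) (hFbd : ∃ C, ∀ x, |F x| ≤ C)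
    -- the extended Markov kernel `κ̂` on `E ∪ {∂}`, where `∂ = none`
    (κhat : Kernel (Option E) (Option E)) [IsMarkovKernel κhat]
    (hκhat : ∀ a : E, ∀ A : Set (Option E), MeasurableSet A →
      κhat (some a) A = κ a (some ⁻¹' A) + (1 - κ a Set.univ) * A.indicator 1 none)
    (hκhatCemetery : κhat none = Measure.dirac none)
    (x₀ : E)
    -- the Markov chain `(X_n)` with transition kernel `κ̂`, `X₀ = x₀`, and law `P = ℙ_{x₀}`
    {Ω : Type*} [MeasurableSpace Ω] (P : Measure Ω) [IsProbabilityMeasure P]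
    (X : ℕ → Ω → Option E) (hXmeas : ∀ n, Measurable (X n))
    (hX₀ : ∀ ω, X 0 ω = some x₀)
    (hMarkov : ∀ n : ℕ, ∀ f : (Fin (n + 1) → Option E) → ℝ, Measurable f →
      (∃ Cf, ∀ v, |f v| ≤ Cf) → ∀ g : Option E → ℝ, Measurable g → (∃ Cg, ∀ y, |g y| ≤ Cg) →
      ∫ ω, f (fun i => X i ω) * g (X (n + 1) ω) ∂P
        = ∫ ω, f (fun i => X i ω) * ∫ y, g y ∂(κhat (X n ω)) ∂P) :
    Summable (fun j =>
      |Kiter κ j (fun x => 2 * F x * (∑' n, Kiter κ n F x) - F x ^ 2) x₀|) ∧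
    ∫ ω, (∑' n, (X n ω).elim 0 F) ^ 2 ∂P
      = ∑' j, Kiter κ j (fun x => 2 * F x * (∑' n, Kiter κ n F x) - F x ^ 2) x₀ := by
  obtain ⟨M, hFM⟩ := hFbd
  have hM : 0 ≤ M := (abs_nonneg _).trans (hFM x₀)
  obtain ⟨c, hc, hc1, hcon⟩ : ∃ c : ℝ, 0 ≤ c ∧ c < 1 ∧
      ∀ x, ∫⁻ y, κ y Set.univ ∂(κ x) ≤ ENNReal.ofReal c :=
    ⟨max C₁ 0, le_max_right _ _, max_lt hC₁ one_pos, fun x =>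
      (hcontract x).trans (ENNReal.ofReal_le_ofReal (le_max_left _ _))⟩
  clear hcontract
  set r : ℕ → ℝ := fun n => c ^ (n / 2) with hr
  have hrs : Summable r := aux_summable_s4 hc hc1
  have hr0 : ∀ n, 0 ≤ r n := fun n => by positivity
  have hr1 : ∀ n, r n ≤ 1 := fun n => pow_le_one₀ hc hc1.le
  have hKb : ∀ {g : E → ℝ} {L : ℝ}, 0 ≤ L → (∀ x, |g x| ≤ L) → ∀ n x, |Kiter κ n g x| ≤ L * r n :=
    fun hL hg n => aux_Kiter_bd κ hsub hc hcon hL hg n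
  -- integrability of bounded functions of the chain
  have hint : ∀ {g : E → ℝ} {L : ℝ}, Measurable g → 0 ≤ L → (∀ x, |g x| ≤ L) → ∀ n,
      Integrable (fun ω => (X n ω).elim 0 g) P := by
    intro g L hg hL hb n
    exact Integrable.of_bound ((aux_meas_elim hg).comp (hXmeas n)).aestronglyMeasurable L
      (Filter.Eventually.of_forall fun ω => aux_elim_bd hL hb _)
  -- Markov property at later times
  have hcorr : ∀ (k n : ℕ) {h g : E → ℝ} {L L' : ℝ}, Measurable h → Measurable g → 0 ≤ L →
      0 ≤ L' → (∀ x, |h x| ≤ L) → (∀ x, |g x| ≤ L') →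
      ∫ ω, (X n ω).elim 0 h * (X (n + k) ω).elim 0 g ∂P
        = ∫ ω, (X n ω).elim 0 (fun x => h x * Kiter κ k g x) ∂P := by
    intro k n h g L L' hh hg hL hL' hhb hgb
    induction k generalizing g with
    | zero =>
      congr 1
      funext ω
      simp only [add_zero]
      cases X n ω <;> simp [Kiter]
    | succ k ih =>
      have h1 := hMarkov (n + k)
        (fun v => (v ⟨n, by omega⟩).elim 0 h)
        ((aux_meas_elim hh).comp (measurable_pi_apply _))
        ⟨L, fun v => aux_elim_bd hL hhb _⟩
        (fun y => y.elim 0 g) (aux_meas_elim hg) ⟨L', fun y => aux_elim_bd hL' hgb y⟩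
      simp only [aux_khat κ hsub κhat hκhat hκhatCemetery hg hL' hgb] at h1
      rw [← add_assoc, h1, ih (aux_Kop_meas κ hg) (aux_Kop_bd1 κ hsub hL' hgb),
        aux_Kiter_comm]
  have hexp : ∀ (n : ℕ) {g : E → ℝ} {L : ℝ}, Measurable g → 0 ≤ L → (∀ x, |g x| ≤ L) →
      ∫ ω, (X n ω).elim 0 g ∂P = Kiter κ n g x₀ := by
    intro n g L hg hL hb
    have h1 := hcorr n 0 (h := fun _ => 1) (L := 1) measurable_const hg zero_le_one hL
      (fun _ => by simp) hb
    simpa [hX₀] using h1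
  -- the Neumann series
  have husum : ∀ x, Summable (fun n => Kiter κ n F x) := fun x =>
    Summable.of_norm_bounded (hrs.mul_left M) (fun n => hKb hM hFM n x)
  have humeas : Measurable (fun x => ∑' n, Kiter κ n F x) :=
    Measurable.tsum fun n => aux_Kiter_meas κ hFmeas n
  have hub : ∀ x, |∑' n, Kiter κ n F x| ≤ M * ∑' n, r n := by
    intro x
    rw [← tsum_mul_left]
    have h : ∀ n, ‖Kiter κ n F x‖ ≤ M * r n := fun n => hKb hM hFM n x
    exact tsum_of_norm_bounded (hrs.mul_left M).hasSum h
  have hR : 0 ≤ ∑' n, r n := tsum_nonneg hr0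
  set G : E → ℝ := fun x => 2 * F x * (∑' n, Kiter κ n F x) - F x ^ 2 with hG
  have hGmeas : Measurable G := ((hFmeas.const_mul 2).mul humeas).sub (hFmeas.pow_const 2)
  obtain ⟨L, hL, hGb⟩ : ∃ L : ℝ, 0 ≤ L ∧ ∀ x, |G x| ≤ L := by
    refine ⟨2 * M * (M * ∑' n, r n) + M ^ 2, by positivity, fun x => ?_⟩
    refine (abs_sub _ _).trans ?_
    rw [abs_mul, abs_mul, abs_pow, abs_two]
    gcongr
    · exact hFM x
    · exact hub x
    · exact hFM x
  refine ⟨Summable.of_nonneg_of_le (fun _ => abs_nonneg _) (fun j => hKb hL hGb j x₀)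
    (hrs.mul_left L), ?_⟩
  -- weights
  set w : ℕ → ℝ := fun k => 2 - if k = 0 then 1 else 0 with hw
  have hw2 : ∀ k, |w k| ≤ 2 := by
    intro k
    simp only [hw]
    split_ifs <;> norm_num
  set H : ℕ × ℕ → Ω → ℝ := fun p ω =>
    w p.2 * ((X p.1 ω).elim 0 F * (X (p.1 + p.2) ω).elim 0 F) with hH
  have hHint : ∀ p, Integrable (H p) P := by
    intro p
    refine Integrable.const_mul ?_ _
    exact (hint hFmeas hM hFM p.1).mul_bdd (c := M) (hint hFmeas hM hFM (p.1 + p.2)).1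
      (Filter.Eventually.of_forall fun ω => aux_elim_bd hM hFM _)
  have habsm : Measurable (fun x => |F x|) := hFmeas.abs
  have habsb : ∀ x, |(|F x|)| ≤ M := fun x => by simpa using hFM x
  have hnorm : ∀ o : Option E, |o.elim 0 F| = o.elim 0 (fun x => |F x|) := by
    intro o
    cases o <;> simp
  have hHnorm : ∀ p, ∫ ω, ‖H p ω‖ ∂P ≤ 2 * (M * M) * (r p.1 * r p.2) := by
    intro p
    have e : ∀ ω, ‖H p ω‖ = |w p.2| * ((X p.1 ω).elim 0 (fun x => |F x|) *
        (X (p.1 + p.2) ω).elim 0 (fun x => |F x|)) := by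
      intro ω
      simp only [hH, Real.norm_eq_abs, abs_mul, hnorm]
    simp only [e]
    have hb : ∀ x, |(|F x| * Kiter κ p.2 (fun x => |F x|) x)| ≤ M * (M * r p.2) := by
      intro x
      rw [abs_mul]
      exact mul_le_mul (habsb x) (hKb hM habsb _ x) (abs_nonneg _) hM
    have hmm : Measurable (fun x => |F x| * Kiter κ p.2 (fun x => |F x|) x) :=
      habsm.mul (aux_Kiter_meas κ habsm _)
    have hnn : 0 ≤ M * (M * r p.2) := mul_nonneg hM (mul_nonneg hM (hr0 _))
    rw [integral_const_mul, hcorr p.2 p.1 habsm habsm hM hM habsb habsb,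
      hexp p.1 hmm hnn hb]
    calc |w p.2| * Kiter κ p.1 (fun x => |F x| * Kiter κ p.2 (fun x => |F x|) x) x₀
        ≤ |w p.2| * (M * (M * r p.2) * r p.1) :=
          mul_le_mul_of_nonneg_left ((le_abs_self _).trans (hKb hnn hb p.1 x₀)) (abs_nonneg _)
      _ ≤ 2 * (M * (M * r p.2) * r p.1) :=
          mul_le_mul_of_nonneg_right (hw2 _) (mul_nonneg hnn (hr0 _))
      _ = _ := by ring
  have hrr : Summable (fun p : ℕ × ℕ => r p.1 * r p.2) :=
    hrs.mul_of_nonneg hrs hr0 hr0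
  have hHsum : Summable (fun p => ∫ ω, ‖H p ω‖ ∂P) :=
    Summable.of_nonneg_of_le (fun p => integral_nonneg fun _ => norm_nonneg _) hHnorm
      (hrr.mul_left _)
  have hmain := hasSum_integral_of_summable_integral_norm hHint hHsum
  have hae : ∀ᵐ ω ∂P, Summable (fun n => (X n ω).elim 0 F) := by
    refine aux_ae_summable (fun n => hint hFmeas hM hFM n) (hrs.mul_left M) fun n => ?_
    simp only [Real.norm_eq_abs, hnorm]
    rw [hexp n habsm hM habsb]
    exact (le_abs_self _).trans (hKb hM habsb n x₀)
  have hS : ∫ ω, (∑' p, H p ω) ∂P = ∫ ω, (∑' n, (X n ω).elim 0 F) ^ 2 ∂P := by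
    refine integral_congr_ae ?_
    filter_upwards [hae] with ω hω
    exact (aux_sq hω).tsum_eq
  rw [hS] at hmain
  -- the rows
  have hrow : ∀ n, HasSum (fun k => ∫ ω, H (n, k) ω ∂P) (Kiter κ n G x₀) := by
    intro n
    have hfb : ∀ k x, |w k * (F x * Kiter κ k F x)| ≤ 2 * (M * (M * r k)) := by
      intro k x
      rw [abs_mul, abs_mul]
      exact mul_le_mul (hw2 k) (mul_le_mul (hFM x) (hKb hM hFM _ x) (abs_nonneg _) hM)
        (by positivity) (by norm_num)
    have hfm : ∀ k, Measurable (fun x => w k * (F x * Kiter κ k F x)) := fun k =>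
      (hFmeas.mul (aux_Kiter_meas κ hFmeas k)).const_mul _
    have hnn : ∀ k, 0 ≤ 2 * (M * (M * r k)) := fun k => by
      have := hr0 k
      positivity
    have hfi : ∀ k, Integrable
        (fun ω => (X n ω).elim 0 (fun x => w k * (F x * Kiter κ k F x))) P := fun k =>
      hint (hfm k) (hnn k) (hfb k) n
    have h1 := hasSum_integral_of_summable_integral_norm hfi (by
      refine Summable.of_nonneg_of_le (fun p => integral_nonneg fun _ => norm_nonneg _)
        (f := fun k => 2 * (M * (M * r k))) (fun k => ?_)
        (((hrs.mul_left M).mul_left M).mul_left 2)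
      have h2 : ∫ ω, ‖(X n ω).elim 0 (fun x => w k * (F x * Kiter κ k F x))‖ ∂P
          ≤ ∫ _ω, 2 * (M * (M * r k)) ∂P :=
        integral_mono (hfi k).norm (integrable_const _)
          (fun ω => aux_elim_bd (hnn k) (hfb k) _)
      simpa using h2)
    have hpt : ∀ o : Option E,
        ∑' k, o.elim 0 (fun x => w k * (F x * Kiter κ k F x)) = o.elim 0 G := by
      intro o
      cases o with
      | none => simp
      | some x =>
        simp only [Option.elim_some]
        have h3 : HasSum (fun k : ℕ => if k = 0 then F x * F x else 0) (F x * F x) :=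
          hasSum_ite_eq 0 _
        have h4 := ((husum x).hasSum.mul_left (2 * F x)).sub h3
        have e1 : (fun k => w k * (F x * Kiter κ k F x)) = fun k : ℕ =>
            2 * F x * Kiter κ k F x - if k = 0 then F x * F x else 0 := by
          funext k
          simp only [hw]
          split_ifs with hk
          · subst hk
            simp only [Kiter, id]
            ring
          · ring
        rw [e1, h4.tsum_eq]
        simp only [hG]
        ring
    simp only [hpt] at h1
    rw [hexp n hGmeas hL hGb] at h1
    have e2 : (fun k => ∫ ω, H (n, k) ω ∂P) = fun k =>
        ∫ ω, (X n ω).elim 0 (fun x => w k * (F x * Kiter κ k F x)) ∂P := by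
      funext k
      simp only [hH]
      rw [integral_const_mul, hcorr k n hFmeas hFmeas hM hM hFM hFM, ← integral_const_mul]
      congr 1
      funext ω
      cases X n ω <;> simp
    rw [e2]
    exact h1
  exact (hmain.prod_fiberwise hrow).tsum_eq.symm
end

section
/- Let z ≥ 0, 0 < h ≤ 1, x = (x₁, x₂) ∈ ℝ², and let f : ℝ² → ℝ be four times continuously differentiable on a neighborhood of the rectangle [x₁, x₁+2h] × [x₂−h, x₂+h], with all partial derivatives of order 3 and 4 bounded in absolute value by M there, and with Δ f = 0 there (f harmonic). Set φ̄ = f(x) − z ∂₁ f(x) (the Robin boundary value with normal derivative −∂₁ f). Then the local consistency bound |(h + z) f(x) − z R_h f(x) − h φ̄| ≤ 2 z M h³ holds; i.e. the partially reflecting replacement step has local bias of order h³. -/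
open Real

/-- The five-point discrete Laplacian
`Δ^h f(y) = h⁻²(f(y+he₁) + f(y−he₁) + f(y+he₂) + f(y−he₂) − 4 f(y))`. -/
noncomputable def lapFD (h : ℝ) (f : ℝ × ℝ → ℝ) (y : ℝ × ℝ) : ℝ :=
  (f (y.1 + h, y.2) + f (y.1 - h, y.2) + f (y.1, y.2 + h) + f (y.1, y.2 - h) - 4 * f y) / h ^ 2

/-- The one-sided normal difference
`∇^h f(x) = −(2h)⁻¹ (4 f(x+he₁) − 3 f(x) − f(x+2he₁))`. -/
noncomputable def gradFD (h : ℝ) (f : ℝ × ℝ → ℝ) (x : ℝ × ℝ) : ℝ :=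
  -(4 * f (x.1 + h, x.2) - 3 * f x - f (x.1 + 2 * h, x.2)) / (2 * h)

/-- The reflection average `R_h f(x) = (f(x+h(e₁+e₂)) + f(x+h(e₁−e₂)))/2`. -/
noncomputable def reflFD (h : ℝ) (f : ℝ × ℝ → ℝ) (x : ℝ × ℝ) : ℝ :=
  (f (x.1 + h, x.2 + h) + f (x.1 + h, x.2 - h)) / 2


lemma taylor3_aux (h K : ℝ) (hh : 0 ≤ h) (g0 g1 g2 g3 : ℝ → ℝ)
    (d0 : ∀ t ∈ Set.Icc 0 h, HasDerivAt g0 (g1 t) t)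
    (d1 : ∀ t ∈ Set.Icc 0 h, HasDerivAt g1 (g2 t) t)
    (d2 : ∀ t ∈ Set.Icc 0 h, HasDerivAt g2 (g3 t) t)
    (hK : ∀ t ∈ Set.Icc 0 h, |g3 t| ≤ K) :
    |g0 h - g0 0 - h * g1 0 - h ^ 2 / 2 * g2 0| ≤ K * h ^ 3 / 6 := by
  have step : ∀ (u u' B B' : ℝ → ℝ), (∀ t ∈ Set.Icc 0 h, HasDerivAt u (u' t) t) →
      (∀ t, HasDerivAt B (B' t) t) → u 0 = 0 → B 0 = 0 →
      (∀ t ∈ Set.Icc 0 h, |u' t| ≤ B' t) → ∀ t ∈ Set.Icc 0 h, |u t| ≤ B t := by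
    intro u u' B B' hu hB u0 B0 hb t ht
    have := image_norm_le_of_norm_deriv_right_le_deriv_boundary (f := u) (f' := u') (a := 0)
      (b := h) (B := B) (B' := B')
      (fun s hs => (hu s hs).continuousAt.continuousWithinAt)
      (fun s hs => (hu s ⟨hs.1, hs.2.le⟩).hasDerivWithinAt) (by simp [u0, B0]) hB
      (fun s hs => hb s ⟨hs.1, hs.2.le⟩) ht
    exact this
  have s2 := step (fun t => g2 t - g2 0) g3 (fun t => K * t) (fun _ => K)
    (fun t ht => (d2 t ht).sub_const _)
    (fun t => by simpa using (hasDerivAt_id t).const_mul K) (by simp) (by simp) hK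
  have s1 := step (fun t => g1 t - g1 0 - t * g2 0) (fun t => g2 t - g2 0)
    (fun t => K * t ^ 2 / 2) (fun t => K * t)
    (fun t ht => by
      have := ((d1 t ht).sub_const (g1 0)).sub ((hasDerivAt_id t).mul_const (g2 0))
      refine HasDerivAt.congr_deriv this ?_
      ring)
    (fun t => by
      have := ((hasDerivAt_pow 2 t).const_mul K).div_const 2
      refine HasDerivAt.congr_deriv this ?_
      push_cast; ring) (by simp) (by simp) s2
  have s0 := step (fun t => g0 t - g0 0 - t * g1 0 - t ^ 2 / 2 * g2 0)
    (fun t => g1 t - g1 0 - t * g2 0)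
    (fun t => K * t ^ 3 / 6) (fun t => K * t ^ 2 / 2)
    (fun t ht => by
      have := (((d0 t ht).sub_const (g0 0)).sub ((hasDerivAt_id t).mul_const (g1 0))).sub
        (((hasDerivAt_pow 2 t).div_const 2).mul_const (g2 0))
      refine HasDerivAt.congr_deriv this ?_
      push_cast; ring)
    (fun t => by
      have := ((hasDerivAt_pow 3 t).const_mul K).div_const 6
      refine HasDerivAt.congr_deriv this ?_
      push_cast; ring) (by simp) (by simp) s1
  exact s0 h ⟨hh, le_rfl⟩

lemma deriv_line_aux (f : ℝ × ℝ → ℝ) (U : Set (ℝ × ℝ)) (hU : IsOpen U)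
    (hf : ContDiffOn ℝ 4 f U) (n : ℕ) (hn : n < 4) (x w : ℝ × ℝ) (t : ℝ) (ht : x + t • w ∈ U) :
    HasDerivAt (fun s : ℝ => iteratedFDerivWithin ℝ n f U (x + s • w) (fun _ => w))
      (iteratedFDerivWithin ℝ (n + 1) f U (x + t • w) (fun _ => w)) t := by
  have hd := (hf.differentiableOn_iteratedFDerivWithin (m := n) (by exact_mod_cast hn)
    hU.uniqueDiffOn) _ ht
  have h1 := hd.hasFDerivWithinAt.hasFDerivAt (hU.mem_nhds ht)
  have hl : HasDerivAt (fun s : ℝ => x + s • w) w t := by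
    simpa using ((hasDerivAt_id t).smul_const w).const_add x
  have h2 := h1.comp_hasDerivAt t hl
  have h3 := ((ContinuousMultilinearMap.apply ℝ (fun _ : Fin n => ℝ × ℝ) ℝ
    (fun _ => w)).hasFDerivAt).comp_hasDerivAt t h2
  rw [iteratedFDerivWithin_succ_apply_left]
  exact h3

lemma bound3_aux (M s : ℝ) (hs : |s| = 1)
    (T : ContinuousMultilinearMap ℝ (fun _ : Fin 3 => ℝ × ℝ) ℝ)
    (hT : ∀ v : Fin 3 → ℝ × ℝ,
      (∀ i, v i = ((1 : ℝ), (0 : ℝ)) ∨ v i = ((0 : ℝ), (1 : ℝ))) → |T v| ≤ M) :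
    |T (fun _ => (1, s))| ≤ 8 * M := by
  have e : (fun _ : Fin 3 => ((1 : ℝ), s)) = (fun _ => (1, 0)) + (fun _ => (0, s)) := by
    ext <;> simp
  rw [e, ContinuousMultilinearMap.map_add_univ]
  refine (Finset.abs_sum_le_sum_abs _ _).trans ?_
  have : ∀ S ∈ (Finset.univ : Finset (Finset (Fin 3))),
      |T (S.piecewise (fun _ => ((1 : ℝ), (0 : ℝ))) (fun _ => (0, s)))| ≤ M := by
    intro S _
    have e2 : S.piecewise (fun _ => ((1 : ℝ), (0 : ℝ))) (fun _ => (0, s)) =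
        fun i => (if i ∈ S then (1 : ℝ) else s) •
          (if i ∈ S then ((1 : ℝ), (0 : ℝ)) else (0, 1)) := by
      funext i
      by_cases hi : i ∈ S <;> simp [hi]
    rw [e2, T.map_smul_univ, smul_eq_mul, abs_mul, Finset.abs_prod]
    have : ∏ i, |if i ∈ S then (1 : ℝ) else s| = 1 := by
      apply Finset.prod_eq_one
      intro i _
      split_ifs <;> simp [hs]
    rw [this, one_mul]
    apply hT
    intro i
    by_cases hi : i ∈ S <;> simp [hi]
  refine (Finset.sum_le_sum this).trans ?_
  simp

lemma sum2_aux (T : ContinuousMultilinearMap ℝ (fun _ : Fin 2 => ℝ × ℝ) ℝ) :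
    T (fun _ => (1, 1)) + T (fun _ => (1, -1)) =
      2 * (T ![(1, 0), (1, 0)] + T ![(0, 1), (0, 1)]) := by
  have key : ∀ s : ℝ, T (fun _ => (1, s)) = T ![(1, 0), (1, 0)] + s * T ![(1, 0), (0, 1)]
      + s * T ![(0, 1), (1, 0)] + s * s * T ![(0, 1), (0, 1)] := by
    intro s
    have hv : ((1 : ℝ), s) = (1, 0) + s • (0, 1) := by ext <;> simp
    have e : (fun _ : Fin 2 => ((1 : ℝ), s)) = ![(1, 0) + s • (0, 1), (1, 0) + s • (0, 1)] := by
      funext i; fin_cases i <;> simp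
    have a0 : ∀ a b c : ℝ × ℝ, T ![a + s • b, c] = T ![a, c] + s * T ![b, c] := by
      intro a b c
      have u : ∀ y, Function.update ![a, c] 0 y = ![y, c] := by
        intro y; funext i; fin_cases i <;> simp
      have h1 := T.map_update_add ![a, c] 0 a (s • b)
      have h2 := T.map_update_smul ![a, c] 0 s b
      rw [u, u, u] at h1
      rw [u, u] at h2
      rw [h1, h2, smul_eq_mul]
    have a1 : ∀ a b c : ℝ × ℝ, T ![c, a + s • b] = T ![c, a] + s * T ![c, b] := by
      intro a b c
      have u : ∀ y, Function.update ![c, a] 1 y = ![c, y] := by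
        intro y; funext i; fin_cases i <;> simp
      have h1 := T.map_update_add ![c, a] 1 a (s • b)
      have h2 := T.map_update_smul ![c, a] 1 s b
      rw [u, u, u] at h1
      rw [u, u] at h2
      rw [h1, h2, smul_eq_mul]
    rw [e, a0, a1, a1]
    ring
  rw [key 1, key (-1)]
  ring

/-- Let `z ≥ 0`, `0 < h ≤ 1`, `x = (x₁,x₂) ∈ ℝ²`, and let `f` be `C⁴` on a neighborhood of
`[x₁, x₁+2h] × [x₂−h, x₂+h]`, with all partial derivatives of order 3 and 4 bounded in
absolute value by `M` there and `Δ f = 0` there.  With `φ̄ = f(x) − z ∂₁ f(x)` (the Robin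
boundary value) the local consistency bound
`|(h + z) f(x) − z R_h f(x) − h φ̄| ≤ 2 z M h³` holds. -/
theorem stmt12 (z : ℝ) (hz : 0 ≤ z) (h : ℝ) (hh0 : 0 < h) (hh1 : h ≤ 1)
    (x : ℝ × ℝ) (M : ℝ) (f : ℝ × ℝ → ℝ)
    (U : Set (ℝ × ℝ)) (hU : IsOpen U)
    (hrect : Set.Icc x.1 (x.1 + 2 * h) ×ˢ Set.Icc (x.2 - h) (x.2 + h) ⊆ U)
    (hf : ContDiffOn ℝ 4 f U)
    (hM3 : ∀ p ∈ Set.Icc x.1 (x.1 + 2 * h) ×ˢ Set.Icc (x.2 - h) (x.2 + h),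
      ∀ v : Fin 3 → ℝ × ℝ,
      (∀ i, v i = ((1 : ℝ), (0 : ℝ)) ∨ v i = ((0 : ℝ), (1 : ℝ))) →
      |iteratedFDerivWithin ℝ 3 f U p v| ≤ M)
    (hM4 : ∀ p ∈ Set.Icc x.1 (x.1 + 2 * h) ×ˢ Set.Icc (x.2 - h) (x.2 + h),
      ∀ v : Fin 4 → ℝ × ℝ,
      (∀ i, v i = ((1 : ℝ), (0 : ℝ)) ∨ v i = ((0 : ℝ), (1 : ℝ))) →
      |iteratedFDerivWithin ℝ 4 f U p v| ≤ M)
    (hharm : ∀ p ∈ Set.Icc x.1 (x.1 + 2 * h) ×ˢ Set.Icc (x.2 - h) (x.2 + h),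
      iteratedFDerivWithin ℝ 2 f U p ![(1, 0), (1, 0)]
        + iteratedFDerivWithin ℝ 2 f U p ![(0, 1), (0, 1)] = 0) :
    |(h + z) * f x - z * reflFD h f x
        - h * (f x - z * fderivWithin ℝ f U x (1, 0))| ≤ 2 * z * M * h ^ 3 := by
  have mem : ∀ s : ℝ, |s| = 1 → ∀ t ∈ Set.Icc 0 h, x + t • ((1 : ℝ), s) ∈
      Set.Icc x.1 (x.1 + 2 * h) ×ˢ Set.Icc (x.2 - h) (x.2 + h) := by
    intro s hs t ht
    obtain ⟨h0, h1⟩ := ht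
    have hts : |t * s| ≤ h := by rw [abs_mul, hs, abs_of_nonneg h0]; linarith
    have := abs_le.mp hts
    simp only [Set.mem_prod, Set.mem_Icc, Prod.fst_add, Prod.snd_add, Prod.smul_mk, smul_eq_mul]
    refine ⟨⟨?_, ?_⟩, ?_, ?_⟩ <;> linarith
  have main : ∀ s : ℝ, |s| = 1 →
      |f (x.1 + h, x.2 + h * s) - f x - h * fderivWithin ℝ f U x (1, s)
        - h ^ 2 / 2 * iteratedFDerivWithin ℝ 2 f U x (fun _ => (1, s))| ≤ 8 * M * h ^ 3 / 6 := by
    intro s hs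
    have hd : ∀ n < 4, ∀ t ∈ Set.Icc 0 h, _ := fun n hn t ht =>
      deriv_line_aux f U hU hf n hn x (1, s) t (hrect (mem s hs t ht))
    have := taylor3_aux h (8 * M) hh0.le _ _ _ _ (hd 0 (by norm_num)) (hd 1 (by norm_num))
      (hd 2 (by norm_num)) (fun t ht => bound3_aux M s hs _ (hM3 _ (mem s hs t ht)))
    have hxU : x ∈ U := by simpa using hrect (mem s hs 0 ⟨le_rfl, hh0.le⟩)
    have e1 : x + h • ((1 : ℝ), s) = (x.1 + h, x.2 + h * s) := by ext <;> simp
    simp only [zero_smul, add_zero, iteratedFDerivWithin_zero_apply, zero_add, Nat.reduceAdd,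
      e1, iteratedFDerivWithin_one_apply (hU.uniqueDiffOn x hxU)] at this
    exact this
  have hx := mem 1 (by simp) 0 ⟨le_rfl, hh0.le⟩
  rw [zero_smul, add_zero] at hx
  have p := main 1 (by simp)
  have q := main (-1) (by simp)
  have hs2 := sum2_aux (iteratedFDerivWithin ℝ 2 f U x)
  rw [hharm x hx] at hs2
  have hs1 : fderivWithin ℝ f U x (1, 1) + fderivWithin ℝ f U x (1, -1)
      = 2 * fderivWithin ℝ f U x (1, 0) := by
    rw [← map_add, ← smul_eq_mul, ← map_smul]
    congr 1
    ext <;> norm_num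
  have hM : 0 ≤ M := (abs_nonneg _).trans (hM3 x hx (fun _ => (1, 0)) (by simp))
  rw [mul_one] at p
  rw [mul_neg_one, ← sub_eq_add_neg] at q
  have hMh : 0 ≤ M * h ^ 3 := by positivity
  have hB : |f x + h * fderivWithin ℝ f U x (1, 0) - reflFD h f x| ≤ 2 * M * h ^ 3 := by
    unfold reflFD
    rw [abs_le] at p q ⊢
    generalize fderivWithin ℝ f U x (1, 1) = A at *
    generalize fderivWithin ℝ f U x (1, -1) = B at *
    generalize fderivWithin ℝ f U x (1, 0) = C at *
    generalize iteratedFDerivWithin ℝ 2 f U x (fun _ => (1, 1)) = D at *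
    generalize iteratedFDerivWithin ℝ 2 f U x (fun _ => (1, -1)) = E at *
    obtain rfl : C = (A + B) / 2 := by linarith
    obtain rfl : E = -D := by linarith
    constructor <;> linarith [p.1, p.2, q.1, q.2]
  have e : (h + z) * f x - z * reflFD h f x - h * (f x - z * fderivWithin ℝ f U x (1, 0))
      = z * (f x + h * fderivWithin ℝ f U x (1, 0) - reflFD h f x) := by ring
  rw [e, abs_mul, abs_of_nonneg hz]
  calc _ ≤ z * (2 * M * h ^ 3) := mul_le_mul_of_nonneg_left hB hz
    _ = _ := by ring
end

section
/- Let κ₁, κ₂ > 0, 0 < h₁ ≤ 1, 0 < h₂ ≤ 1, x = (x₁, x₂) ∈ ℝ². Let f⁺ : ℝ² → ℝ be four times continuously differentiable on a neighborhood of the rectangle [x₁, x₁+2h₂] × [x₂−h₂, x₂+h₂] and f⁻ : ℝ² → ℝ four times continuously differentiable on a neighborhood of the rectangle [x₁−2h₁, x₁] × [x₂−h₁, x₂+h₁], with all partial derivatives of order 3 and 4 of f⁺ and f⁻ bounded in absolute value by M on the respective rectangles, with Δ f⁺ = 0 and Δ f⁻ = 0 there (harmonicity), and suppose the continuity and transmission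 conditions f⁺(x) = f⁻(x) and κ₂ ∂₁ f⁺(x) = κ₁ ∂₁ f⁻(x) hold at x. Then |(κ₂ h₁ + κ₁ h₂) f⁺(x) − κ₂ h₁ R_{h₂} f⁺(x) − κ₁ h₂ R_{−h₁} f⁻(x)| ≤ 2 M (κ₂ h₁ h₂³ + κ₁ h₂ h₁³); i.e. the interface replacement step is consistent with local bias of the stated order. -/
open Real

lemma aux_one (g0 g1 g2 g3 : ℝ → ℝ) (C : ℝ)
    (h0 : ∀ t ∈ Set.Icc (0:ℝ) 1, HasDerivAt g0 (g1 t) t)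
    (h1 : ∀ t ∈ Set.Icc (0:ℝ) 1, HasDerivAt g1 (g2 t) t)
    (h2 : ∀ t ∈ Set.Icc (0:ℝ) 1, HasDerivAt g2 (g3 t) t)
    (hC : ∀ t ∈ Set.Icc (0:ℝ) 1, |g3 t| ≤ C) :
    |g0 1 - g0 0 - g1 0 - g2 0 / 2| ≤ C / 6 := by
  have key : ∀ (u u' B B' : ℝ → ℝ), (∀ t ∈ Set.Icc (0:ℝ) 1, HasDerivAt u (u' t) t) →
      (∀ t, HasDerivAt B (B' t) t) → |u 0| ≤ B 0 →
      (∀ t ∈ Set.Icc (0:ℝ) 1, |u' t| ≤ B' t) → ∀ t ∈ Set.Icc (0:ℝ) 1, |u t| ≤ B t := by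
    intro u u' B B' hu hB hu0 hb t ht
    exact image_norm_le_of_norm_deriv_right_le_deriv_boundary (f := u) (f' := u') (B := B)
      (B' := B')
      (fun t ht => (hu t ht).continuousAt.continuousWithinAt)
      (fun t ht => (hu t ⟨ht.1, ht.2.le⟩).hasDerivWithinAt) hu0 hB
      (fun t ht => hb t ⟨ht.1, ht.2.le⟩) ht
  have s2 := key (fun t => g2 t - g2 0) g3 (fun t => C * t) (fun _ => C)
    (fun t ht => (h2 t ht).sub_const _)
    (fun t => by simpa using (hasDerivAt_id t).const_mul C) (by simp) hC
  have s1 := key (fun t => g1 t - g1 0 - g2 0 * t) (fun t => g2 t - g2 0)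
    (fun t => C * t ^ 2 / 2) (fun t => C * t)
    (fun t ht => by
      refine HasDerivAt.congr_deriv (((h1 t ht).sub_const (g1 0)).sub
        ((hasDerivAt_id t).const_mul (g2 0))) ?_
      ring)
    (fun t => by
      refine HasDerivAt.congr_deriv (((hasDerivAt_pow 2 t).const_mul C).div_const 2) ?_
      norm_num; try ring) (by simp) s2
  have s0 := key (fun t => g0 t - g0 0 - g1 0 * t - g2 0 * t ^ 2 / 2)
    (fun t => g1 t - g1 0 - g2 0 * t)
    (fun t => C * t ^ 3 / 6) (fun t => C * t ^ 2 / 2)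
    (fun t ht => by
      refine HasDerivAt.congr_deriv ((((h0 t ht).sub_const (g0 0)).sub ((hasDerivAt_id t).const_mul (g1 0))).sub
        (((hasDerivAt_pow 2 t).const_mul (g2 0)).div_const 2)) ?_
      norm_num; try ring)
    (fun t => by
      refine HasDerivAt.congr_deriv (((hasDerivAt_pow 3 t).const_mul C).div_const 6) ?_
      norm_num; try ring) (by simp) s1
  simpa using s0 1 (by simp)

lemma aux_deriv (f : ℝ × ℝ → ℝ) (U : Set (ℝ × ℝ)) (hU : IsOpen U) (hf : ContDiffOn ℝ 4 f U)
    (p v : ℝ × ℝ) (n : ℕ) (hn : n < 4) (t : ℝ) (ht : p + t • v ∈ U) :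
    HasDerivAt (fun t : ℝ => iteratedFDerivWithin ℝ n f U (p + t • v) (fun _ => v))
      (iteratedFDerivWithin ℝ (n + 1) f U (p + t • v) (fun _ => v)) t := by
  have hd : DifferentiableAt ℝ (iteratedFDerivWithin ℝ n f U) (p + t • v) :=
    ((hf.differentiableOn_iteratedFDerivWithin (by exact_mod_cast hn)
      hU.uniqueDiffOn) _ ht).differentiableAt (hU.mem_nhds ht)
  have hl : HasDerivAt (fun t : ℝ => p + t • v) v t := by
    simpa using ((hasDerivAt_id t).smul_const v).const_add p
  have h := hd.hasFDerivAt.comp_hasDerivAt t hl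
  have h' := ((ContinuousMultilinearMap.apply ℝ (fun _ : Fin n => ℝ × ℝ) ℝ
    (fun _ => v)).hasFDerivAt).comp_hasDerivAt t h
  rw [iteratedFDerivWithin_succ_apply_left, fderivWithin_of_isOpen hU ht]
  exact h'

lemma aux_taylor (f : ℝ × ℝ → ℝ) (U : Set (ℝ × ℝ)) (hU : IsOpen U) (hf : ContDiffOn ℝ 4 f U)
    (p v : ℝ × ℝ) (C : ℝ) (hs : ∀ t ∈ Set.Icc (0:ℝ) 1, p + t • v ∈ U)
    (hC : ∀ t ∈ Set.Icc (0:ℝ) 1, |iteratedFDerivWithin ℝ 3 f U (p + t • v) (fun _ => v)| ≤ C) :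
    |f (p + v) - f p - fderivWithin ℝ f U p v
      - iteratedFDerivWithin ℝ 2 f U p ![v, v] / 2| ≤ C / 6 := by
  have h := aux_one _ _ _ _ C
    (fun t ht => aux_deriv f U hU hf p v 0 (by norm_num) t (hs t ht))
    (fun t ht => aux_deriv f U hU hf p v 1 (by norm_num) t (hs t ht))
    (fun t ht => aux_deriv f U hU hf p v 2 (by norm_num) t (hs t ht)) hC
  have hp : p ∈ U := by simpa using hs 0 (by simp)
  have e : (![v, v] : Fin 2 → ℝ × ℝ) = fun _ => v := by
    ext i <;> fin_cases i <;> rfl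
  rw [e]
  have e1 : iteratedFDerivWithin ℝ 1 f U p (fun _ => v) = fderivWithin ℝ f U p v :=
    iteratedFDerivWithin_one_apply (hU.uniqueDiffOn p hp) _
  simpa [e1] using h

lemma aux_cube (T : ContinuousMultilinearMap ℝ (fun _ : Fin 3 => ℝ × ℝ) ℝ) (M h a b : ℝ)
    (ha : |a| = h) (hb : |b| = h)
    (hT : ∀ v : Fin 3 → ℝ × ℝ,
      (∀ i, v i = ((1 : ℝ), (0 : ℝ)) ∨ v i = ((0 : ℝ), (1 : ℝ))) → |T v| ≤ M) :
    |T (fun _ => (a, b))| ≤ 8 * (h ^ 3 * M) := by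
  have e : (fun _ : Fin 3 => ((a, b) : ℝ × ℝ)) =
      fun _ => ∑ j : Fin 2, (![a, b] j) • (![((1:ℝ), (0:ℝ)), (0, 1)] j) := by
    funext i; simp
  rw [e, T.map_sum]
  refine (Finset.abs_sum_le_sum_abs _ _).trans ?_
  have : ∀ r ∈ (Finset.univ : Finset (Fin 3 → Fin 2)),
      |T (fun i => (![a, b] (r i)) • (![((1:ℝ), (0:ℝ)), (0, 1)] (r i)))| ≤ h ^ 3 * M := by
    intro r _
    rw [T.map_smul_univ, smul_eq_mul, abs_mul, Finset.abs_prod]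
    have : ∀ i, |(![a, b] (r i))| = h := by
      intro i
      generalize r i = j
      fin_cases j <;> simp [ha, hb]
    simp only [this, Finset.prod_const, Finset.card_univ, Fintype.card_fin]
    refine mul_le_mul_of_nonneg_left (hT _ ?_) (pow_nonneg (ha ▸ abs_nonneg a) 3)
    intro i
    generalize r i = j
    fin_cases j <;> simp
  refine (Finset.sum_le_card_nsmul _ _ _ this).trans ?_
  simp

lemma aux_side (f : ℝ × ℝ → ℝ) (U R : Set (ℝ × ℝ)) (hU : IsOpen U) (hf : ContDiffOn ℝ 4 f U)
    (hR : R ⊆ U) (x : ℝ × ℝ) (M h s : ℝ) (hs : |s| = h)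
    (hM : ∀ p ∈ R, ∀ v : Fin 3 → ℝ × ℝ,
      (∀ i, v i = ((1 : ℝ), (0 : ℝ)) ∨ v i = ((0 : ℝ), (1 : ℝ))) →
      |iteratedFDerivWithin ℝ 3 f U p v| ≤ M)
    (hharm : iteratedFDerivWithin ℝ 2 f U x ![(1, 0), (1, 0)]
        + iteratedFDerivWithin ℝ 2 f U x ![(0, 1), (0, 1)] = 0)
    (hseg : ∀ t ∈ Set.Icc (0:ℝ) 1, x + t • (s, s) ∈ R ∧ x + t • (s, -s) ∈ R) :
    |reflFD s f x - f x - s * fderivWithin ℝ f U x (1, 0)| ≤ 2 * M * h ^ 3 := by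
  have t1 := aux_taylor f U hU hf x (s, s) (8 * (h ^ 3 * M)) (fun t ht => hR (hseg t ht).1)
    (fun t ht => aux_cube _ M h s s hs hs (hM _ (hseg t ht).1))
  have t2 := aux_taylor f U hU hf x (s, -s) (8 * (h ^ 3 * M)) (fun t ht => hR (hseg t ht).2)
    (fun t ht => aux_cube _ M h s (-s) hs (by rwa [abs_neg]) (hM _ (hseg t ht).2))
  have hM0 : 0 ≤ M := (abs_nonneg _).trans
    (hM _ (hseg 0 (by simp)).1 (fun _ => (1, 0)) (fun _ => Or.inl rfl))
  have hh : 0 ≤ h ^ 3 * M := mul_nonneg (pow_nonneg (hs ▸ abs_nonneg s) 3) hM0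
  have hx : x ∈ U := by simpa using hR (hseg 0 (by simp)).1
  have hv : ∀ c : ℝ, ((s, c) : ℝ × ℝ) = s • ((1:ℝ), (0:ℝ)) + c • ((0:ℝ), (1:ℝ)) := by
    intro c; simp
  have d2 : ∀ c : ℝ, iteratedFDerivWithin ℝ 2 f U x ![(s, c), (s, c)] =
      s * s * iteratedFDerivWithin ℝ 2 f U x ![(1, 0), (1, 0)]
      + s * c * (iteratedFDerivWithin ℝ 2 f U x ![(1, 0), (0, 1)]
        + iteratedFDerivWithin ℝ 2 f U x ![(0, 1), (1, 0)])
      + c * c * iteratedFDerivWithin ℝ 2 f U x ![(0, 1), (0, 1)] := by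
    intro c
    rw [iteratedFDerivWithin_two_apply f hU.uniqueDiffOn hx,
      iteratedFDerivWithin_two_apply f hU.uniqueDiffOn hx,
      iteratedFDerivWithin_two_apply f hU.uniqueDiffOn hx,
      iteratedFDerivWithin_two_apply f hU.uniqueDiffOn hx,
      iteratedFDerivWithin_two_apply f hU.uniqueDiffOn hx]
    simp only [Matrix.cons_val_zero, Matrix.cons_val_one]
    rw [hv c]
    simp only [map_add, map_smul, add_apply, smul_apply,
      smul_eq_mul]
    ring
  have d1 : ∀ c : ℝ, fderivWithin ℝ f U x (s, c) =
      s * fderivWithin ℝ f U x (1, 0) + c * fderivWithin ℝ f U x (0, 1) := by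
    intro c
    rw [hv c]
    simp only [map_add, map_smul, smul_eq_mul]
  rw [d1, d2] at t1 t2
  have hz := congrArg (fun z => s * s * z) hharm
  simp only [mul_zero, mul_add] at hz
  have ep : reflFD s f x = (f (x + (s, s)) + f (x + (s, -s))) / 2 := by
    simp only [reflFD]; rfl
  rw [ep]
  rw [abs_le] at *
  constructor <;> nlinarith [t1.1, t1.2, t2.1, t2.2]

/-- Interface consistency: let `κ₁, κ₂ > 0`, `0 < h₁, h₂ ≤ 1`, `x ∈ ℝ²`, let `f⁺` be `C⁴`
on a neighborhood of `[x₁, x₁+2h₂] × [x₂−h₂, x₂+h₂]` and `f⁻` be `C⁴` on a neighborhood of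
`[x₁−2h₁, x₁] × [x₂−h₁, x₂+h₁]`, with all partials of order 3 and 4 bounded by `M` on the
respective rectangles, both harmonic there, and suppose `f⁺(x) = f⁻(x)` and
`κ₂ ∂₁f⁺(x) = κ₁ ∂₁f⁻(x)`.  Then
`|(κ₂h₁ + κ₁h₂) f⁺(x) − κ₂h₁ R_{h₂} f⁺(x) − κ₁h₂ R_{−h₁} f⁻(x)| ≤ 2M(κ₂h₁h₂³ + κ₁h₂h₁³)`. -/
theorem stmt14 (κ₁ κ₂ : ℝ) (hκ₁ : 0 < κ₁) (hκ₂ : 0 < κ₂)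
    (h₁ h₂ : ℝ) (hh₁0 : 0 < h₁) (hh₁1 : h₁ ≤ 1) (hh₂0 : 0 < h₂) (hh₂1 : h₂ ≤ 1)
    (x : ℝ × ℝ) (M : ℝ) (fp fm : ℝ × ℝ → ℝ)
    (Up Um : Set (ℝ × ℝ)) (hUp : IsOpen Up) (hUm : IsOpen Um)
    (hrectp : Set.Icc x.1 (x.1 + 2 * h₂) ×ˢ Set.Icc (x.2 - h₂) (x.2 + h₂) ⊆ Up)
    (hrectm : Set.Icc (x.1 - 2 * h₁) x.1 ×ˢ Set.Icc (x.2 - h₁) (x.2 + h₁) ⊆ Um)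
    (hfp : ContDiffOn ℝ 4 fp Up) (hfm : ContDiffOn ℝ 4 fm Um)
    (hMp3 : ∀ p ∈ Set.Icc x.1 (x.1 + 2 * h₂) ×ˢ Set.Icc (x.2 - h₂) (x.2 + h₂),
      ∀ v : Fin 3 → ℝ × ℝ,
      (∀ i, v i = ((1 : ℝ), (0 : ℝ)) ∨ v i = ((0 : ℝ), (1 : ℝ))) →
      |iteratedFDerivWithin ℝ 3 fp Up p v| ≤ M)
    (hMp4 : ∀ p ∈ Set.Icc x.1 (x.1 + 2 * h₂) ×ˢ Set.Icc (x.2 - h₂) (x.2 + h₂),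
      ∀ v : Fin 4 → ℝ × ℝ,
      (∀ i, v i = ((1 : ℝ), (0 : ℝ)) ∨ v i = ((0 : ℝ), (1 : ℝ))) →
      |iteratedFDerivWithin ℝ 4 fp Up p v| ≤ M)
    (hMm3 : ∀ p ∈ Set.Icc (x.1 - 2 * h₁) x.1 ×ˢ Set.Icc (x.2 - h₁) (x.2 + h₁),
      ∀ v : Fin 3 → ℝ × ℝ,
      (∀ i, v i = ((1 : ℝ), (0 : ℝ)) ∨ v i = ((0 : ℝ), (1 : ℝ))) →
      |iteratedFDerivWithin ℝ 3 fm Um p v| ≤ M)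
    (hMm4 : ∀ p ∈ Set.Icc (x.1 - 2 * h₁) x.1 ×ˢ Set.Icc (x.2 - h₁) (x.2 + h₁),
      ∀ v : Fin 4 → ℝ × ℝ,
      (∀ i, v i = ((1 : ℝ), (0 : ℝ)) ∨ v i = ((0 : ℝ), (1 : ℝ))) →
      |iteratedFDerivWithin ℝ 4 fm Um p v| ≤ M)
    (hharmp : ∀ p ∈ Set.Icc x.1 (x.1 + 2 * h₂) ×ˢ Set.Icc (x.2 - h₂) (x.2 + h₂),
      iteratedFDerivWithin ℝ 2 fp Up p ![(1, 0), (1, 0)]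
        + iteratedFDerivWithin ℝ 2 fp Up p ![(0, 1), (0, 1)] = 0)
    (hharmm : ∀ p ∈ Set.Icc (x.1 - 2 * h₁) x.1 ×ˢ Set.Icc (x.2 - h₁) (x.2 + h₁),
      iteratedFDerivWithin ℝ 2 fm Um p ![(1, 0), (1, 0)]
        + iteratedFDerivWithin ℝ 2 fm Um p ![(0, 1), (0, 1)] = 0)
    (hcont : fp x = fm x)
    (htrans : κ₂ * fderivWithin ℝ fp Up x (1, 0) = κ₁ * fderivWithin ℝ fm Um x (1, 0)) :
    |(κ₂ * h₁ + κ₁ * h₂) * fp x - κ₂ * h₁ * reflFD h₂ fp x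
        - κ₁ * h₂ * reflFD (-h₁) fm x|
      ≤ 2 * M * (κ₂ * h₁ * h₂ ^ 3 + κ₁ * h₂ * h₁ ^ 3) := by
  have hp := aux_side fp Up _ hUp hfp hrectp x M h₂ h₂ (abs_of_pos hh₂0) hMp3
    (hharmp x ⟨⟨le_rfl, by linarith⟩, ⟨by linarith, by linarith⟩⟩)
    (fun t ht => by
      obtain ⟨ht0, ht1⟩ := ht
      have a := mul_nonneg ht0 hh₂0.le
      have b := mul_le_mul_of_nonneg_right ht1 hh₂0.le
      constructor <;> refine ⟨⟨?_, ?_⟩, ⟨?_, ?_⟩⟩ <;> simp <;> linarith)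
  have hm := aux_side fm Um _ hUm hfm hrectm x M h₁ (-h₁)
    (by rw [abs_neg, abs_of_pos hh₁0]) hMm3
    (hharmm x ⟨⟨by linarith, le_rfl⟩, ⟨by linarith, by linarith⟩⟩)
    (fun t ht => by
      obtain ⟨ht0, ht1⟩ := ht
      have a := mul_nonneg ht0 hh₁0.le
      have b := mul_le_mul_of_nonneg_right ht1 hh₁0.le
      constructor <;> refine ⟨⟨?_, ?_⟩, ⟨?_, ?_⟩⟩ <;> simp <;> linarith)
  have hp' := mul_le_mul_of_nonneg_left hp (mul_pos hκ₂ hh₁0).le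
  have hm' := mul_le_mul_of_nonneg_left hm (mul_pos hκ₁ hh₂0).le
  rw [← abs_of_pos (mul_pos hκ₂ hh₁0), ← abs_mul, abs_of_pos (mul_pos hκ₂ hh₁0)] at hp'
  rw [← abs_of_pos (mul_pos hκ₁ hh₂0), ← abs_mul, abs_of_pos (mul_pos hκ₁ hh₂0)] at hm'
  have e : (κ₂ * h₁ + κ₁ * h₂) * fp x - κ₂ * h₁ * reflFD h₂ fp x
        - κ₁ * h₂ * reflFD (-h₁) fm x =
      -(κ₂ * h₁ * (reflFD h₂ fp x - fp x - h₂ * fderivWithin ℝ fp Up x (1, 0))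
        + κ₁ * h₂ * (reflFD (-h₁) fm x - fm x - -h₁ * fderivWithin ℝ fm Um x (1, 0))) := by
    rw [← hcont]
    linear_combination (-(h₁ * h₂)) * htrans
  rw [e, abs_neg]
  refine (abs_add_le _ _).trans ((add_le_add hp' hm').trans (le_of_eq ?_))
  ring
end

section
/- Fix R > 0 and 0 ≤ r < R, set c = (R − r)/(R + r) and f(u) = 2 arctan(c · tan(π u)) for u ∈ (−1/2, 1/2). Then f is differentiable on (−1/2, 1/2) and its derivative satisfies f'(u) = 2π (R² − 2 R r cos(f(u)) + r²)/(R² − r²) for every u ∈ (−1/2, 1/2); equivalently, f'(u) · P(f(u)) = 1 where P(α) = (R² − r²)/(2π (R² − 2 R r cos α + r²)) is the Poisson kernel of the disk of radius R evaluated at radius r. -/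
open Real

/-- Fix `R > 0`, `0 ≤ r < R`, set `c = (R−r)/(R+r)` and `f(u) = 2 arctan(c tan(π u))` for
`u ∈ (−1/2, 1/2)`.  Then `f` is differentiable on `(−1/2, 1/2)` with
`f'(u) = 2π (R² − 2Rr cos(f(u)) + r²)/(R² − r²)`; equivalently `f'(u) · P(f(u)) = 1`, where
`P(α) = (R² − r²)/(2π (R² − 2Rr cos α + r²))` is the Poisson kernel of the disk of radius
`R` at radius `r`. -/
theorem stmt15 (R r : ℝ) (hR : 0 < R) (hr : 0 ≤ r) (hrR : r < R) :
    ∀ u ∈ Set.Ioo (-(1 / 2) : ℝ) (1 / 2),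
      HasDerivAt (fun u : ℝ => 2 * arctan ((R - r) / (R + r) * tan (π * u)))
        (2 * π * (R ^ 2 - 2 * R * r *
            cos (2 * arctan ((R - r) / (R + r) * tan (π * u))) + r ^ 2) / (R ^ 2 - r ^ 2)) u
      ∧ deriv (fun u : ℝ => 2 * arctan ((R - r) / (R + r) * tan (π * u))) u
          * ((R ^ 2 - r ^ 2) / (2 * π * (R ^ 2 - 2 * R * r *
              cos (2 * arctan ((R - r) / (R + r) * tan (π * u))) + r ^ 2))) = 1 := by
  intro u hu
  have hpi := Real.pi_pos
  have hcos : 0 < cos (π * u) := by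
    apply Real.cos_pos_of_mem_Ioo
    constructor
    · nlinarith [hu.1]
    · nlinarith [hu.2]
  have h1 : HasDerivAt (fun u : ℝ => π * u) π u := by
    simpa using (hasDerivAt_id u).const_mul π
  have h2 := ((((Real.hasDerivAt_tan hcos.ne').comp u h1).const_mul
    ((R - r) / (R + r))).arctan).const_mul 2
  have hs : 0 < R + r := by linarith
  have hd : 0 < R - r := by linarith
  have hsec : 1 / cos (π * u) ^ 2 = 1 + tan (π * u) ^ 2 := by
    rw [← Real.inv_one_add_tan_sq hcos.ne']
    simp
  have hcf : ∀ x : ℝ, cos (2 * arctan x) = 2 * (1 / (1 + x ^ 2)) - 1 := fun x => by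
    rw [Real.cos_two_mul, Real.cos_sq_arctan]
  have hQ : R ^ 2 - 2 * R * r * cos (2 * arctan ((R - r) / (R + r) * tan (π * u))) + r ^ 2
      = (R - r) ^ 2 * (1 + tan (π * u) ^ 2)
        / (1 + ((R - r) / (R + r) * tan (π * u)) ^ 2) := by
    rw [hcf]
    have h3 : 1 + ((R - r) / (R + r) * tan (π * u)) ^ 2 ≠ 0 := by positivity
    rw [eq_div_iff h3]
    have h4 : (R - r) / (R + r) * (R + r) = R - r := div_mul_cancel₀ _ hs.ne'
    generalize (R - r) / (R + r) = c at *
    generalize tan (π * u) = t at *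
    have h5 : 1 / (1 + (c * t) ^ 2) * (1 + (c * t) ^ 2) = 1 := by field_simp
    rw [← h4]
    have h6 : (c * (R + r)) ^ 2 = (R - r) ^ 2 := by rw [h4]
    linear_combination (-4 * R * r) * h5 - h6
  have hQpos : 0 < R ^ 2 - 2 * R * r *
      cos (2 * arctan ((R - r) / (R + r) * tan (π * u))) + r ^ 2 := by
    rw [hQ]; positivity
  have hRr : R ^ 2 - r ^ 2 = (R - r) * (R + r) := by ring
  have hRr0 : R ^ 2 - r ^ 2 ≠ 0 := by rw [hRr]; positivity
  have key : HasDerivAt (fun u : ℝ => 2 * arctan ((R - r) / (R + r) * tan (π * u)))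
        (2 * π * (R ^ 2 - 2 * R * r *
            cos (2 * arctan ((R - r) / (R + r) * tan (π * u))) + r ^ 2) / (R ^ 2 - r ^ 2)) u := by
    refine h2.congr_deriv ?_
    rw [hQ, hsec, hRr]
    simp only [Function.comp_apply]
    have h3 : 1 + ((R - r) / (R + r) * tan (π * u)) ^ 2 ≠ 0 := by positivity
    generalize 1 + ((R - r) / (R + r) * tan (π * u)) ^ 2 = D at *
    field_simp
  refine ⟨key, ?_⟩
  rw [key.deriv]
  generalize R ^ 2 - 2 * R * r *
      cos (2 * arctan ((R - r) / (R + r) * tan (π * u))) + r ^ 2 = Q at *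
  have := hQpos.ne'
  field_simp
end

section
/- Fix R > 0 and 0 ≤ r < R, set c = (R − r)/(R + r) and f(u) = 2 arctan(c · tan(π u)) for u ∈ (−1/2, 1/2). Then the pushforward under f of the uniform probability measure on the interval (−1/2, 1/2) is absolutely continuous with respect to Lebesgue measure on ℝ, with density α ↦ (R² − r²)/(2π (R² − 2 R r cos α + r²)) on (−π, π) and 0 outside; i.e. if U is uniformly distributed on (−1/2, 1/2), then f(U) is distributed according to the Poisson kernel of the disk of radius R at radius r. -/
open Real MeasureTheory

lemma aux_deriv_s16 (R r : ℝ) (hr : 0 ≤ r) (hrR : r < R) (u : ℝ)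
    (hu : u ∈ Set.Ioo (-(1 / 2) : ℝ) (1 / 2)) :
    HasDerivAt (fun u : ℝ => 2 * arctan ((R - r) / (R + r) * tan (π * u)))
      (2 * π * ((R - r) / (R + r)) * (1 + tan (π * u) ^ 2) /
        (1 + ((R - r) / (R + r) * tan (π * u)) ^ 2)) u := by
  have hpi := Real.pi_pos
  have hc : 0 < cos (π * u) := by
    apply Real.cos_pos_of_mem_Ioo
    constructor <;> nlinarith [hu.1, hu.2]
  have h1 : HasDerivAt (fun u : ℝ => π * u) π u := by
    simpa using (hasDerivAt_id u).const_mul π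
  have h2 : HasDerivAt (fun u : ℝ => tan (π * u)) (1 / cos (π * u) ^ 2 * π) u :=
    (Real.hasDerivAt_tan hc.ne').comp u h1
  have h3 := ((h2.const_mul ((R - r) / (R + r))).arctan).const_mul 2
  have : 1 / cos (π * u) ^ 2 = 1 + tan (π * u) ^ 2 := by
    rw [one_div, ← Real.inv_one_add_tan_sq hc.ne', inv_inv]
  rw [this] at h3
  refine h3.congr_deriv ?_
  ring

lemma aux_cos (x : ℝ) : cos (2 * arctan x) = (1 - x ^ 2) / (1 + x ^ 2) := by
  rw [Real.cos_two_mul, Real.cos_sq_arctan]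
  have : 1 + x ^ 2 ≠ 0 := by positivity
  field_simp
  ring

lemma aux_dens (R r : ℝ) (hr : 0 ≤ r) (hrR : r < R) (t : ℝ) :
    (2 * π * ((R - r) / (R + r)) * (1 + t ^ 2) / (1 + ((R - r) / (R + r) * t) ^ 2)) *
    ((R ^ 2 - r ^ 2) / (2 * π * (R ^ 2 - 2 * R * r *
      cos (2 * arctan ((R - r) / (R + r) * t)) + r ^ 2))) = 1 := by
  have hpi := Real.pi_pos
  rw [aux_cos]
  obtain ⟨d, hd⟩ : ∃ d, d = R - r := ⟨_, rfl⟩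
  have hd0 : 0 < d := by linarith
  have hs : 0 < R + r := by linarith
  have hq : 0 < 1 + ((R - r) / (R + r) * t) ^ 2 := by positivity
  have key : R ^ 2 - 2 * R * r * ((1 - ((R - r) / (R + r) * t) ^ 2) /
      (1 + ((R - r) / (R + r) * t) ^ 2)) + r ^ 2 =
      (R - r) ^ 2 * (1 + t ^ 2) / (1 + ((R - r) / (R + r) * t) ^ 2) := by
    rw [eq_div_iff hq.ne']
    have : R ^ 2 - 2 * R * r * ((1 - ((R - r) / (R + r) * t) ^ 2) /
      (1 + ((R - r) / (R + r) * t) ^ 2)) + r ^ 2 =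
      ((R ^ 2 + r ^ 2) * (1 + ((R - r) / (R + r) * t) ^ 2) -
        2 * R * r * (1 - ((R - r) / (R + r) * t) ^ 2)) / (1 + ((R - r) / (R + r) * t) ^ 2) := by
      rw [eq_div_iff hq.ne']
      rw [add_mul, sub_mul, mul_assoc (2 * R * r), div_mul_cancel₀ _ hq.ne']
      ring
    rw [this, div_mul_cancel₀ _ hq.ne']
    field_simp
    ring
  rw [key, ← hd]
  rw [← hd] at hq
  have h1 : 0 < 1 + t ^ 2 := by positivity
  have : R ^ 2 - r ^ 2 = d * (R + r) := by rw [hd]; ring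
  rw [this]
  generalize 1 + (d / (R + r) * t) ^ 2 = q at *
  generalize 1 + t ^ 2 = w at *
  field_simp

lemma aux_image (R r : ℝ) (hr : 0 ≤ r) (hrR : r < R) :
    (fun u : ℝ => 2 * arctan ((R - r) / (R + r) * tan (π * u))) ''
      (Set.Ioo (-(1 / 2) : ℝ) (1 / 2)) = Set.Ioo (-π) π := by
  have hpi := Real.pi_pos
  have hc : 0 < (R - r) / (R + r) := div_pos (by linarith) (by linarith)
  generalize (R - r) / (R + r) = c at *
  ext a
  constructor
  · rintro ⟨u, hu, rfl⟩
    have h1 := Real.neg_pi_div_two_lt_arctan (c * tan (π * u))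
    have h2 := Real.arctan_lt_pi_div_two (c * tan (π * u))
    constructor <;> simp only <;> linarith
  · rintro ⟨h1, h2⟩
    have h3 := Real.neg_pi_div_two_lt_arctan (tan (a / 2) / c)
    have h4 := Real.arctan_lt_pi_div_two (tan (a / 2) / c)
    refine ⟨arctan (tan (a / 2) / c) / π, ⟨?_, ?_⟩, ?_⟩
    · rw [lt_div_iff₀ hpi]; linarith
    · rw [div_lt_iff₀ hpi]; linarith
    · simp only
      rw [mul_div_cancel₀ _ hpi.ne', Real.tan_arctan, mul_div_cancel₀ _ hc.ne',
        Real.arctan_tan (by linarith) (by linarith)]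
      ring

lemma aux_inj (R r : ℝ) (hr : 0 ≤ r) (hrR : r < R) :
    Set.InjOn (fun u : ℝ => 2 * arctan ((R - r) / (R + r) * tan (π * u)))
      (Set.Ioo (-(1 / 2) : ℝ) (1 / 2)) := by
  have hpi := Real.pi_pos
  have hc : 0 < (R - r) / (R + r) := div_pos (by linarith) (by linarith)
  generalize (R - r) / (R + r) = c at *
  intro x hx y hy h
  have h1 : arctan (c * tan (π * x)) = arctan (c * tan (π * y)) := by
    simp only at h; linarith
  have h2 := mul_left_cancel₀ hc.ne' (Real.arctan_injective h1)
  have h3 := Real.tan_inj_of_lt_of_lt_pi_div_two (x := π * x) (y := π * y)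
    (by nlinarith [hx.1]) (by nlinarith [hx.2])
    (by nlinarith [hy.1]) (by nlinarith [hy.2]) h2
  exact mul_left_cancel₀ hpi.ne' h3

/-- Fix `R > 0`, `0 ≤ r < R`, set `c = (R−r)/(R+r)` and `f(u) = 2 arctan(c tan(π u))`.
The pushforward under `f` of the uniform probability measure on `(−1/2, 1/2)` is
absolutely continuous with respect to Lebesgue measure with density
`α ↦ (R² − r²)/(2π (R² − 2Rr cos α + r²))` on `(−π, π)` and `0` outside: if `U` is uniform
on `(−1/2, 1/2)`, then `f(U)` is distributed according to the Poisson kernel of the disk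
of radius `R` at radius `r`. -/
theorem stmt16 (R r : ℝ) (hR : 0 < R) (hr : 0 ≤ r) (hrR : r < R) :
    Measure.map (fun u : ℝ => 2 * arctan ((R - r) / (R + r) * tan (π * u)))
        (volume.restrict (Set.Ioo (-(1 / 2) : ℝ) (1 / 2)))
      = volume.withDensity (fun α => ENNReal.ofReal
          (Set.indicator (Set.Ioo (-π) π)
            (fun α => (R ^ 2 - r ^ 2) / (2 * π * (R ^ 2 - 2 * R * r * cos α + r ^ 2))) α)) := by
  have hpi := Real.pi_pos
  have htan : Measurable tan := by
    have : tan = fun x => sin x / cos x := funext Real.tan_eq_sin_div_cos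
    rw [this]
    exact Real.measurable_sin.div Real.measurable_cos
  have hf : Measurable (fun u : ℝ => 2 * arctan ((R - r) / (R + r) * tan (π * u))) :=
    (Real.measurable_arctan.comp
      ((htan.comp (measurable_id.const_mul π)).const_mul _)).const_mul 2
  ext A hA
  rw [Measure.map_apply hf hA, withDensity_apply _ hA]
  set p : ℝ → ℝ := fun α => (R ^ 2 - r ^ 2) / (2 * π * (R ^ 2 - 2 * R * r * cos α + r ^ 2))
    with hp
  have e1 : ∫⁻ α in A, ENNReal.ofReal ((Set.Ioo (-π) π).indicator p α) =
      ∫⁻ α in Set.Ioo (-π) π, A.indicator (fun α => ENNReal.ofReal (p α)) α := by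
    rw [← lintegral_indicator hA, ← lintegral_indicator measurableSet_Ioo]
    congr 1
    ext α
    by_cases h1 : α ∈ A <;> by_cases h2 : α ∈ Set.Ioo (-π) π <;>
      simp only [Set.indicator_of_mem, Set.indicator_of_notMem, h1, h2, not_false_eq_true,
        ENNReal.ofReal_zero]
  rw [e1, ← aux_image R r hr hrR, lintegral_image_eq_lintegral_abs_deriv_mul measurableSet_Ioo
    (fun x hx => (aux_deriv_s16 R r hr hrR x hx).hasDerivWithinAt) (aux_inj R r hr hrR)]
  rw [← lintegral_indicator_one (hf hA)]
  apply lintegral_congr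
  intro u
  by_cases h : 2 * arctan ((R - r) / (R + r) * tan (π * u)) ∈ A
  · rw [Set.indicator_of_mem h, Set.indicator_of_mem (by exact h), ← ENNReal.ofReal_mul (abs_nonneg _),
      abs_of_nonneg, hp]
    · simp only
      rw [aux_dens R r hr hrR]
      simp
    · have hc : 0 < (R - r) / (R + r) := div_pos (by linarith) (by linarith)
      positivity
  · rw [Set.indicator_of_notMem h, Set.indicator_of_notMem (by exact h), mul_zero]
end
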